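/- arXiv:2304.03539 — 10 statements merged into one kernel-verified Lean document; each statement's English description precedes it below -/
import Mathlib

section
/- J coincides with the set of skew-adjoint endomorphisms vanishing on H: J = {λ ∈ End_E(V) | H ⊆ ker λ and B(λ(x), x') = −B(x, λ(x')) for all x, x' ∈ V}. -/
/-!
For an endomorphism `l` put `C(x, y) = B(l x, y) + B(x, l y)`, so that `l` is skew-adjoint exactly
when `C = 0`. If `l` vanishes on `H`, then `C(h, y) = B(h, l y)` for `h ∈ H`, so the range of `l`
lies in `H^⊥` exactly when `H` lies in the radical of `C`. Since `B` is skew-symmetric, `C` is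
alternating, and an alternating form whose radical contains `H` descends to `V / H`, where it
vanishes because `V / H` is spanned by one vector.
-/

theorem eq_zero_of_le_ker_of_sup_span_singleton_eq_top {R M N : Type*} [Semiring R]
    [AddCommMonoid M] [Module R M] [AddCommMonoid N] [Module R N] {f : M →ₗ[R] N}
    {H : Submodule R M} {v : M} (hv : H ⊔ Submodule.span R {v} = ⊤) (hH : H ≤ LinearMap.ker f)
    (hfv : f v = 0) : f = 0 := by
  rw [← LinearMap.ker_eq_top, eq_top_iff, ← hv, sup_le_iff, Submodule.span_singleton_le_iff_mem]
  exact ⟨hH, hfv⟩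

section

variable {R M N : Type*} [CommRing R] [AddCommGroup M] [Module R M] [AddCommGroup N] [Module R N]

theorem eq_zero_of_isAlt_of_le_ker {C : M →ₗ[R] M →ₗ[R] N} (hC : C.IsAlt) {H : Submodule R M}
    {v : M} (hv : H ⊔ Submodule.span R {v} = ⊤) (hH : H ≤ LinearMap.ker C) : C = 0 := by
  have hCv : H ≤ LinearMap.ker (C v) := fun h hh => by
    rw [LinearMap.mem_ker, ← hC.neg, LinearMap.mem_ker.mp (hH hh), LinearMap.zero_apply, neg_zero]
  have hCv_zero : C v = 0 :=
    eq_zero_of_le_ker_of_sup_span_singleton_eq_top hv hCv (hC.self_eq_zero v)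
  exact eq_zero_of_le_ker_of_sup_span_singleton_eq_top hv hH hCv_zero

/-- The bilinear form `(x, y) ↦ B (l x) y + B x (l y)`, which measures the failure of `l` to be
skew-adjoint with respect to `B`. -/
def skewDefect (B : LinearMap.BilinForm R M) (l : Module.End R M) : LinearMap.BilinForm R M :=
  B ∘ₗ l + B.compl₂ l

variable {B : LinearMap.BilinForm R M} {l : Module.End R M} {H : Submodule R M}

theorem skewDefect_apply (x y : M) : skewDefect B l x y = B (l x) y + B x (l y) := rfl

theorem skewDefect_eq_zero_iff : skewDefect B l = 0 ↔ ∀ x y, B (l x) y = -B x (l y) := by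
  simp only [LinearMap.ext_iff₂, skewDefect_apply, LinearMap.zero_apply, add_eq_zero_iff_eq_neg]

theorem isAlt_skewDefect (hB : ∀ x y, -B x y = B y x) : (skewDefect B l).IsAlt := fun x => by
  rw [skewDefect_apply, ← hB x (l x), neg_add_cancel]

theorem le_ker_skewDefect_iff (hl : H ≤ LinearMap.ker l) :
    H ≤ LinearMap.ker (skewDefect B l) ↔ LinearMap.range l ≤ B.orthogonal H := by
  have hdefect {h : M} (hh : h ∈ H) (y : M) : skewDefect B l h y = B h (l y) := by
    rw [skewDefect_apply, LinearMap.mem_ker.mp (hl hh), map_zero, LinearMap.zero_apply, zero_add]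
  constructor
  · rintro hker _ ⟨y, rfl⟩ h hh
    rw [← hdefect hh, LinearMap.mem_ker.mp (hker hh), LinearMap.zero_apply]
  · intro hrange h hh
    ext y
    rw [hdefect hh, LinearMap.zero_apply]
    exact hrange (LinearMap.mem_range_self l y) h hh

theorem stmt3_general (hB : ∀ x y, -B x y = B y x) {v : M}
    (hv : H ⊔ Submodule.span R {v} = ⊤) :
    {l : Module.End R M | H ≤ LinearMap.ker l ∧ LinearMap.range l ≤ B.orthogonal H}
      = {l : Module.End R M |
          H ≤ LinearMap.ker l ∧ ∀ x x' : M, B (l x) x' = -B x (l x')} := by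
  ext l
  refine and_congr_right fun hl => ?_
  rw [← le_ker_skewDefect_iff hl, ← skewDefect_eq_zero_iff]
  exact ⟨eq_zero_of_isAlt_of_le_ker (isAlt_skewDefect hB) hv,
    fun hzero => le_top.trans_eq (LinearMap.ker_eq_top.mpr hzero).symm⟩

end

theorem exists_sup_span_singleton_eq_top_of_finrank_add_one {K V : Type*} [DivisionRing K]
    [AddCommGroup V] [Module K V] [FiniteDimensional K V] {H : Submodule K V}
    (hH : Module.finrank K H + 1 = Module.finrank K V) :
    ∃ v, H ⊔ Submodule.span K {v} = ⊤ := by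
  have hquot : Module.finrank K (V ⧸ H) = 1 := by
    have := H.finrank_quotient_add_finrank
    omega
  have hlt : H < ⊤ := Submodule.lt_top_of_finrank_lt_finrank (hH ▸ Nat.lt_succ_self _)
  obtain ⟨v, -, hv⟩ := SetLike.exists_of_lt hlt
  exact ⟨v, (Submodule.sup_span_singleton_eq_top_iff hv).mpr hquot⟩

/-- `J` coincides with the set of skew-adjoint endomorphisms vanishing on `H`. -/
theorem stmt3 {E V : Type*} [Field E] [AddCommGroup V] [Module E V]
    [FiniteDimensional E V] (hchar : (2 : E) ≠ 0)
    (B : LinearMap.BilinForm E V) (hB : B.Nondegenerate) (halt : B.IsAlt)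
    (H : Submodule E V) (hH : Module.finrank E H + 1 = Module.finrank E V) :
    {l : Module.End E V | H ≤ LinearMap.ker l ∧ LinearMap.range l ≤ B.orthogonal H}
      = {l : Module.End E V |
          H ≤ LinearMap.ker l ∧ ∀ x x' : V, B (l x) x' = - B x (l x')} := by
  obtain ⟨v, hv⟩ := exists_sup_span_singleton_eq_top_of_finrank_add_one hH
  exact stmt3_general halt.neg_eq hv
end

section
/- The set of composites {g ∘ h | g, h ∈ End_E(V), range g ⊆ H^⊥, H ⊆ ker h} is exactly equal to J; in particular every λ ∈ J can be written as λ = g ∘ h with range g ⊆ H^⊥ and H ⊆ ker h, and every such product lies in J. -/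
section

variable {R M N : Type*} [Ring R] [AddCommGroup M] [Module R M] [AddCommMonoid N] [Module R N]

theorem comp_projection_eq_self_of_le_ker {p q : Submodule R M} (hpq : IsCompl p q)
    {f : M →ₗ[R] N} (hf : q ≤ LinearMap.ker f) : f ∘ₗ p.projection q hpq = f := by
  ext x
  have hq : f (q.projection p hpq.symm x) = 0 := hf (Submodule.projection_apply_mem hpq.symm x)
  calc
    f (p.projection q hpq x)
        = f (p.projection q hpq x) + f (q.projection p hpq.symm x) := by rw [hq, add_zero]
    _ = f x := by rw [← map_add, Submodule.projection_add_projection_eq_self]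

theorem stmt5_general {K : Submodule R M} (hK : IsComplemented K) (W : Submodule R N) :
    {f : M →ₗ[R] N | ∃ (g : M →ₗ[R] N) (h : Module.End R M),
        LinearMap.range g ≤ W ∧ K ≤ LinearMap.ker h ∧ f = g ∘ₗ h}
      = {l : M →ₗ[R] N | K ≤ LinearMap.ker l ∧ LinearMap.range l ≤ W} := by
  ext l
  constructor
  · rintro ⟨g, h, hg, hh, rfl⟩
    exact ⟨hh.trans (LinearMap.ker_le_ker_comp h g), (LinearMap.range_comp_le_range h g).trans hg⟩
  · rintro ⟨hker, hrange⟩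
    obtain ⟨C, hKC⟩ := hK
    have hCK : IsCompl C K := hKC.symm
    exact ⟨l, C.projection K hCK, hrange, (Submodule.ker_projection hCK).ge,
      (comp_projection_eq_self_of_le_ker hCK hker).symm⟩

end

/-- The set of composites `g ∘ h` with `range g ⊆ H^⊥` and `H ⊆ ker h` is exactly `J`. -/
theorem stmt5 {E V : Type*} [Field E] [AddCommGroup V] [Module E V]
    [FiniteDimensional E V] (hchar : (2 : E) ≠ 0)
    (B : LinearMap.BilinForm E V) (hB : B.Nondegenerate) (halt : B.IsAlt)
    (H : Submodule E V) (hH : Module.finrank E H + 1 = Module.finrank E V) :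
    {f : Module.End E V | ∃ g h : Module.End E V,
        LinearMap.range g ≤ B.orthogonal H ∧ H ≤ LinearMap.ker h ∧ f = g ∘ₗ h}
      = {l : Module.End E V |
          H ≤ LinearMap.ker l ∧ LinearMap.range l ≤ B.orthogonal H} :=
  stmt5_general (exists_isCompl H) (B.orthogonal H)
end

section
/- Fix λ₀ ∈ J with λ₀ ≠ 0 and μ ∈ End_E(V) with trace(λ₀ ∘ μ) = 1 (such μ exists since the trace bilinear form on End_E(V) is nondegenerate). Then the E-linear map can : I ⊗_E I' → J ⊗_E End_E(V) determined on elementary tensors by ξ ⊗ ζ ↦ λ₀ ⊗ (ξ ∘ μ ∘ ζ) is bijective. -/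
open TensorProduct

/-!
Write `H = ker f` and `H^⊥ = E ∙ w`, and let `φ ⊗ v` denote the map `x ↦ φ x • v`. Then `I`
consists of the maps `f ⊗ v`, `I'` of the maps `φ ⊗ w`, and `J` is the line through `f ⊗ w`.
Since `(f ⊗ v) ∘ μ ∘ (φ ⊗ w) = f (μ w) • (φ ⊗ v)`, the map `ξ ⊗ ζ ↦ ξ ∘ μ ∘ ζ` is, up to the
scalar `f (μ w)`, the canonical isomorphism `V ⊗ V* ≅ End V`; and the scalar is nonzero because
`trace (λ₀ ∘ μ)` is a multiple of it. The same argument works for a hyperplane `H` of `V` and a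
line `L` of another space `W` in place of `H^⊥`, with `Hom(V, W)` in place of `End V`.
-/

section CommRing

variable {R U V W X : Type*} [CommRing R] [AddCommGroup U] [Module R U] [AddCommGroup V]
  [Module R V] [AddCommGroup W] [Module R W] [AddCommGroup X] [Module R X]

theorem ker_le_ker_iff_mem_range_smulRightₗ {f : Module.Dual R V} (hf : Function.Surjective f)
    (l : V →ₗ[R] W) :
    LinearMap.ker f ≤ LinearMap.ker l ↔
      l ∈ LinearMap.range (LinearMap.smulRightₗ (M := W) f) := by
  constructor
  · intro hker
    obtain ⟨e, he⟩ := hf 1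
    refine ⟨l e, LinearMap.ext fun x => ?_⟩
    have hx : l (x - f x • e) = 0 := hker (by simp [he])
    rw [map_sub, map_smul, sub_eq_zero] at hx
    exact hx.symm
  · rintro ⟨v, rfl⟩ x hx
    simp [LinearMap.mem_ker.mp hx]

theorem range_le_span_singleton_iff_mem_range_smulRightₗ_flip [IsDomain R]
    [Module.IsTorsionFree R W] {w : W} (hw : w ≠ 0) (l : V →ₗ[R] W) :
    LinearMap.range l ≤ R ∙ w ↔
      l ∈ LinearMap.range ((LinearMap.smulRightₗ (R := R) (M₂ := V)).flip w) := by
  constructor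
  · intro hl
    let coord := (LinearEquiv.toSpanNonzeroSingleton R W w hw).symm.toLinearMap
    refine ⟨coord ∘ₗ l.codRestrict (R ∙ w) fun x => hl ⟨x, rfl⟩, LinearMap.ext fun x => ?_⟩
    simp [coord]
  · rintro ⟨φ, rfl⟩ _ ⟨x, rfl⟩
    exact Submodule.mem_span_singleton.mpr ⟨φ x, rfl⟩

theorem range_smulRightₗ_inf_range_flip {f : Module.Dual R V} (hf : Function.Surjective f)
    (w : W) :
    LinearMap.range (LinearMap.smulRightₗ f) ⊓
      LinearMap.range ((LinearMap.smulRightₗ (R := R) (M₂ := V)).flip w) =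
        R ∙ f.smulRight w := by
  apply le_antisymm
  · rintro _ ⟨⟨v, rfl⟩, φ, hφ⟩
    obtain ⟨e, he⟩ := hf 1
    have hv : φ e • w = v := by simpa [he] using LinearMap.congr_fun hφ e
    refine Submodule.mem_span_singleton.mpr ⟨φ e, ?_⟩
    rw [← hv, map_smul, LinearMap.smulRightₗ_apply]
  · rw [Submodule.span_singleton_le_iff_mem]
    exact ⟨⟨w, rfl⟩, ⟨f, rfl⟩⟩

theorem trace_smulRight_comp [Module.Free R W] [Module.Finite R W] (f : Module.Dual R V) (w : W)
    (μ : W →ₗ[R] V) : LinearMap.trace R W (f.smulRight w ∘ₗ μ) = f (μ w) :=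
  LinearMap.trace_smulRight (f ∘ₗ μ) w

/-- The sandwich map `ξ ⊗ ζ ↦ ξ ∘ μ ∘ ζ` on tensor products of `Hom`-spaces; `can` is its
restriction to `I ⊗ I'` followed by `λ₀ ⊗ ·`. -/
noncomputable def sandwich (μ : W →ₗ[R] V) :
    (V →ₗ[R] X) ⊗[R] (U →ₗ[R] W) →ₗ[R] U →ₗ[R] X :=
  TensorProduct.lift (LinearMap.llcomp R U W X ∘ₗ LinearMap.lcomp R X μ)

theorem sandwich_tmul (μ : W →ₗ[R] V) (ξ : V →ₗ[R] X) (ζ : U →ₗ[R] W) :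
    sandwich μ (ξ ⊗ₜ ζ) = ξ ∘ₗ μ ∘ₗ ζ :=
  rfl

theorem sandwich_comp_map_smulRightₗ (μ : W →ₗ[R] V) (f : Module.Dual R V) (w : W) :
    sandwich μ ∘ₗ TensorProduct.map (LinearMap.smulRightₗ f) (LinearMap.smulRightₗ.flip w) =
      f (μ w) •
        (dualTensorHom R U X ∘ₗ (TensorProduct.comm R X (Module.Dual R U)).toLinearMap) := by
  ext x φ u
  simp [sandwich_tmul, smul_smul, mul_comm]

theorem sandwich_comp_mapIncl_bijective [Module.Finite R U] [Module.Projective R U]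
    {μ : W →ₗ[R] V} {f : Module.Dual R V} {w : W} (hfw : IsUnit (f (μ w))) :
    Function.Bijective (sandwich μ ∘ₗ TensorProduct.mapIncl
      (LinearMap.range (LinearMap.smulRightₗ (M := X) f))
      (LinearMap.range ((LinearMap.smulRightₗ (R := R) (M₂ := U)).flip w))) := by
  let a := LinearMap.smulRightₗ (M := X) f
  let b := (LinearMap.smulRightₗ (R := R) (M₂ := U)).flip w
  let restricted := sandwich μ ∘ₗ TensorProduct.mapIncl (LinearMap.range a) (LinearMap.range b)
  let param := TensorProduct.map a.rangeRestrict b.rangeRestrict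
  have hcomp : Function.Bijective (restricted ∘ₗ param) := by
    have hfactor : restricted ∘ₗ param = sandwich μ ∘ₗ TensorProduct.map a b :=
      TensorProduct.ext' fun _ _ => rfl
    rw [hfactor, sandwich_comp_map_smulRightₗ]
    exact hfw.smul_bijective.comp
      (dualTensorHom_bijective.comp (TensorProduct.comm R X _).bijective)
  have hparam : Function.Surjective param :=
    TensorProduct.map_surjective a.surjective_rangeRestrict b.surjective_rangeRestrict
  exact ⟨Function.Injective.of_comp_right hcomp.injective hparam,
    Function.Surjective.of_comp hcomp.surjective⟩

end CommRing

section Field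

variable {E V W : Type*} [Field E] [AddCommGroup V] [Module E V] [AddCommGroup W] [Module E W]

theorem exists_dual_ker_eq_of_finrank_add_one_eq [FiniteDimensional E V] {H : Submodule E V}
    (hH : Module.finrank E H + 1 = Module.finrank E V) :
    ∃ f : Module.Dual E V, f ≠ 0 ∧ LinearMap.ker f = H := by
  have hlt : H < ⊤ := Submodule.lt_top_of_finrank_lt_finrank (by omega)
  obtain ⟨f, hf, hle⟩ := H.exists_le_ker_of_lt_top hlt
  refine ⟨f, hf, (Submodule.eq_of_le_of_finrank_eq hle ?_).symm⟩
  have := Module.Dual.finrank_ker_add_one_of_ne_zero hf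
  omega

theorem exists_eq_span_singleton_of_finrank_eq_one {L : Submodule E V}
    (hL : Module.finrank E L = 1) : ∃ w : V, w ≠ 0 ∧ L = E ∙ w := by
  obtain ⟨w, hwL, hw, hle⟩ :=
    (rank_submodule_eq_one_iff L).mp (Module.rank_eq_one_iff_finrank_eq_one.mpr hL)
  exact ⟨w, hw, hle.antisymm ((Submodule.span_singleton_le_iff_mem w L).mpr hwL)⟩

theorem tensorProduct_mk_bijective_of_finrank_eq_one (hV : Module.finrank E V = 1) {v : V}
    (hv : v ≠ 0) : Function.Bijective (TensorProduct.mk E V W v) := by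
  let e : E ≃ₗ[E] V := LinearEquiv.ofBijective (LinearMap.toSpanSingleton E V v)
    ⟨smul_left_injective E hv, (finrank_eq_one_iff_of_nonzero' v hv).mp hV⟩
  have hmk : TensorProduct.mk E V W v =
      ((TensorProduct.lid E W).symm ≪≫ₗ TensorProduct.congr e (.refl E W)).toLinearMap := by
    ext x
    simp [show e 1 = v from one_smul E v]
  rw [hmk]
  exact LinearEquiv.bijective _

theorem stmt6_general [FiniteDimensional E V] [FiniteDimensional E W]
    {H : Submodule E V} (hH : Module.finrank E H + 1 = Module.finrank E V)
    {L : Submodule E W} (hL : Module.finrank E L = 1)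
    {I I' J : Submodule E (V →ₗ[E] W)}
    (hI : ∀ l : V →ₗ[E] W, l ∈ I ↔ H ≤ LinearMap.ker l)
    (hI' : ∀ l : V →ₗ[E] W, l ∈ I' ↔ LinearMap.range l ≤ L)
    (hJ : J = I ⊓ I')
    {lam0 : V →ₗ[E] W} (hlam0J : lam0 ∈ J)
    {mu : W →ₗ[E] V} (htr : LinearMap.trace E W (lam0 ∘ₗ mu) ≠ 0)
    {can : (I ⊗[E] I') →ₗ[E] (J ⊗[E] (V →ₗ[E] W))}
    (hcan : ∀ (ξ : I) (ζ : I'),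
      can (ξ ⊗ₜ[E] ζ) = (⟨lam0, hlam0J⟩ : J) ⊗ₜ[E] (ξ.1 ∘ₗ mu ∘ₗ ζ.1)) :
    Function.Bijective can := by
  obtain ⟨f, hf, rfl⟩ := exists_dual_ker_eq_of_finrank_add_one_eq hH
  obtain ⟨w, hw, rfl⟩ := exists_eq_span_singleton_of_finrank_eq_one hL
  have hfsurj : Function.Surjective f := LinearMap.surjective hf
  obtain rfl : I = LinearMap.range (LinearMap.smulRightₗ f) :=
    Submodule.ext fun l => (hI l).trans (ker_le_ker_iff_mem_range_smulRightₗ hfsurj l)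
  obtain rfl : I' = LinearMap.range (LinearMap.smulRightₗ.flip w) :=
    Submodule.ext fun l =>
      (hI' l).trans (range_le_span_singleton_iff_mem_range_smulRightₗ_flip hw l)
  have hJspan : J = E ∙ f.smulRight w := hJ.trans (range_smulRightₗ_inf_range_flip hfsurj w)
  have hJrank : Module.finrank E J = 1 := by
    rw [hJspan, finrank_span_singleton (by simp [hf, hw])]
  have hlam0 : (⟨lam0, hlam0J⟩ : J) ≠ 0 := by
    intro h
    obtain rfl : lam0 = 0 := congrArg Subtype.val h
    simp at htr
  have hfw : f (mu w) ≠ 0 := by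
    obtain ⟨c, rfl⟩ := Submodule.mem_span_singleton.mp (hJspan ▸ hlam0J)
    rw [LinearMap.smul_comp, map_smul, trace_smulRight_comp] at htr
    exact right_ne_zero_of_smul htr
  have hcan_eq : can = TensorProduct.mk E J _ ⟨lam0, hlam0J⟩ ∘ₗ sandwich mu ∘ₗ
      TensorProduct.mapIncl _ _ := TensorProduct.ext' hcan
  rw [hcan_eq]
  exact (tensorProduct_mk_bijective_of_finrank_eq_one hJrank hlam0).comp
    (sandwich_comp_mapIncl_bijective hfw.isUnit)

end Field

/-- Fix `λ₀ ∈ J` nonzero and `μ ∈ End_E(V)` with `trace(λ₀ ∘ μ) = 1`. Then the `E`-linear map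
`can : I ⊗_E I' → J ⊗_E End_E(V)` determined on elementary tensors by
`ξ ⊗ ζ ↦ λ₀ ⊗ (ξ ∘ μ ∘ ζ)` is bijective. -/
theorem stmt6 {E V : Type*} [Field E] [AddCommGroup V] [Module E V]
    [FiniteDimensional E V] (hchar : (2 : E) ≠ 0)
    (B : LinearMap.BilinForm E V) (hB : B.Nondegenerate) (halt : B.IsAlt)
    (H : Submodule E V) (hH : Module.finrank E H + 1 = Module.finrank E V)
    (I I' J : Submodule E (Module.End E V))
    (hI : ∀ l : Module.End E V, l ∈ I ↔ H ≤ LinearMap.ker l)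
    (hI' : ∀ l : Module.End E V, l ∈ I' ↔ LinearMap.range l ≤ B.orthogonal H)
    (hJ : J = I ⊓ I')
    (lam0 : Module.End E V) (hlam0J : lam0 ∈ J) (hlam0 : lam0 ≠ 0)
    (mu : Module.End E V) (htr : LinearMap.trace E V (lam0 ∘ₗ mu) = 1)
    (can : (↥I ⊗[E] ↥I') →ₗ[E] (↥J ⊗[E] Module.End E V))
    (hcan : ∀ (ξ : ↥I) (ζ : ↥I'),
      can (ξ ⊗ₜ[E] ζ) = (⟨lam0, hlam0J⟩ : ↥J) ⊗ₜ[E]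
        ((ξ : Module.End E V) ∘ₗ mu ∘ₗ (ζ : Module.End E V))) :
    Function.Bijective can := by
  have hL : Module.finrank E (B.orthogonal H) = 1 := by
    rw [LinearMap.BilinForm.finrank_orthogonal hB]
    omega
  exact stmt6_general hH hL hI hI' hJ hlam0J (htr ▸ one_ne_zero) hcan
end

section
/- The map can is independent of the choices made in its definition: for any nonzero λ₀, λ₀' ∈ J and any μ, μ' ∈ End_E(V) with trace(λ₀ ∘ μ) = trace(λ₀' ∘ μ') = 1, and for all ξ ∈ I and ζ ∈ I', one has λ₀' ⊗ (ξ ∘ μ' ∘ ζ) = λ₀ ⊗ (ξ ∘ μ ∘ ζ) in J ⊗_E End_E(V). -/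
open TensorProduct

/-!
Endomorphisms of a line are scalars, so an endomorphism with range in a line `L` (here `H^⊥`) acts
on `L` as its trace, and one vanishing on a hyperplane `H` acts on `V ⧸ H` as its trace. Since
`λ₀ ∘ μ` has trace `1`, so does `μ ∘ λ₀`, which gives `ξ = ξ ∘ μ ∘ λ₀` for `ξ ∈ I`. Put
`t = trace (λ₀ ∘ μ')`. Then `ξ ∘ μ' ∘ ζ = (ξ ∘ μ) ∘ (λ₀ ∘ μ') ∘ ζ = t • (ξ ∘ μ ∘ ζ)`, while
evaluating `λ₀ ∘ μ' ∘ λ₀'` from both ends gives `λ₀ = t • λ₀'`; the scalar `t` moves across the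
tensor sign.
-/

section Hyperplane

variable {K V : Type*} [Field K] [AddCommGroup V] [Module K V] {H : Submodule K V}

theorem finrank_quotient_eq_one_of_finrank_add_one_eq
    (hH : Module.finrank K H + 1 = Module.finrank K V) : Module.finrank K (V ⧸ H) = 1 := by
  have : FiniteDimensional K V := Module.finite_of_finrank_eq_succ hH.symm
  rw [H.finrank_quotient, ← hH, Nat.add_sub_cancel_left]

theorem finrank_orthogonal_eq_one_of_finrank_add_one_eq {B : LinearMap.BilinForm K V}
    (hB : B.Nondegenerate) (hH : Module.finrank K H + 1 = Module.finrank K V) :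
    Module.finrank K (B.orthogonal H) = 1 := by
  have : FiniteDimensional K V := Module.finite_of_finrank_eq_succ hH.symm
  rw [LinearMap.BilinForm.finrank_orthogonal hB, ← hH, Nat.add_sub_cancel_left]

end Hyperplane

section RankOne

variable {R U V W : Type*} [CommRing R] [AddCommGroup U] [Module R U] [AddCommGroup V] [Module R V]
  [AddCommGroup W] [Module R W]

theorem eq_trace_smul_id_of_finrank_eq_one [Module.Free R V] (hV : Module.finrank R V = 1)
    (u : Module.End R V) : u = LinearMap.trace R V u • LinearMap.id := by
  nontriviality R using Module.subsingleton R (Module.End R V)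
  have : Module.Finite R V := Module.finite_of_finrank_eq_succ hV
  obtain ⟨c, hc, -⟩ := u.existsUnique_eq_smul_id_of_finrank_eq_one hV
  have htrace : LinearMap.trace R V u = c := by simp [hc, hV]
  rwa [htrace]

variable [Module.Free R V] [Module.Finite R V] {H L : Submodule R V}

theorem comp_eq_trace_smul_of_range_le [Module.Free R L] (hL : Module.finrank R L = 1)
    {u : Module.End R V} (hu : LinearMap.range u ≤ L) {ζ : U →ₗ[R] V}
    (hζ : LinearMap.range ζ ≤ L) : u ∘ₗ ζ = LinearMap.trace R V u • ζ := by
  nontriviality R using Module.subsingleton R (U →ₗ[R] V)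
  have : Module.Finite R L := Module.finite_of_finrank_eq_succ hL
  let u' : V →ₗ[R] L := u.codRestrict L fun x => hu ⟨x, rfl⟩
  have htrace : LinearMap.trace R L (u' ∘ₗ L.subtype) = LinearMap.trace R V u :=
    LinearMap.trace_comp_comm' L.subtype u'
  have hscalar := eq_trace_smul_id_of_finrank_eq_one hL (u' ∘ₗ L.subtype)
  rw [htrace] at hscalar
  ext x
  exact congrArg Subtype.val (LinearMap.congr_fun hscalar ⟨ζ x, hζ ⟨x, rfl⟩⟩)

theorem comp_eq_trace_smul_of_le_ker [Module.Free R (V ⧸ H)] (hH : Module.finrank R (V ⧸ H) = 1)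
    {u : Module.End R V} (hu : H ≤ LinearMap.ker u) {ξ : V →ₗ[R] W}
    (hξ : H ≤ LinearMap.ker ξ) : ξ ∘ₗ u = LinearMap.trace R V u • ξ := by
  let u' : V ⧸ H →ₗ[R] V := H.liftQ u hu
  have htrace : LinearMap.trace R (V ⧸ H) (H.mkQ ∘ₗ u') = LinearMap.trace R V u := by
    rw [LinearMap.trace_comp_comm', H.liftQ_mkQ]
  have hscalar := eq_trace_smul_id_of_finrank_eq_one hH (H.mkQ ∘ₗ u')
  rw [htrace] at hscalar
  ext x
  simpa [u'] using congrArg (H.liftQ ξ hξ) (LinearMap.congr_fun hscalar (H.mkQ x))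

theorem comp_comp_eq_self_of_trace_comp_eq_one [Module.Free R (V ⧸ H)]
    (hH : Module.finrank R (V ⧸ H) = 1) {lam mu : Module.End R V} (hlam : H ≤ LinearMap.ker lam)
    (htr : LinearMap.trace R V (lam ∘ₗ mu) = 1) {ξ : V →ₗ[R] W} (hξ : H ≤ LinearMap.ker ξ) :
    ξ ∘ₗ mu ∘ₗ lam = ξ := by
  rw [comp_eq_trace_smul_of_le_ker hH (hlam.trans (LinearMap.ker_le_ker_comp lam mu)) hξ,
    LinearMap.trace_comp_comm', htr, one_smul]

theorem stmt7_general [Module.Free R (V ⧸ H)] [Module.Free R L]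
    (hH : Module.finrank R (V ⧸ H) = 1) (hL : Module.finrank R L = 1)
    {J : Submodule R (Module.End R V)}
    (hJ : ∀ l ∈ J, H ≤ LinearMap.ker l ∧ LinearMap.range l ≤ L) (lam0 lam0' : J)
    {mu mu' : Module.End R V} (htr : LinearMap.trace R V (lam0 ∘ₗ mu) = 1)
    (htr' : LinearMap.trace R V (lam0' ∘ₗ mu') = 1)
    {ξ : V →ₗ[R] W} {ζ : U →ₗ[R] V} (hξ : H ≤ LinearMap.ker ξ) (hζ : LinearMap.range ζ ≤ L) :
    lam0' ⊗ₜ[R] (ξ ∘ₗ mu' ∘ₗ ζ) = lam0 ⊗ₜ[R] (ξ ∘ₗ mu ∘ₗ ζ) := by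
  obtain ⟨hker, hrange⟩ := hJ lam0 lam0.2
  obtain ⟨hker', hrange'⟩ := hJ lam0' lam0'.2
  let t := LinearMap.trace R V (lam0 ∘ₗ mu')
  have hcomp_range : LinearMap.range (lam0 ∘ₗ mu') ≤ L :=
    (LinearMap.range_comp_le_range mu' _).trans hrange
  have hlam : lam0 = t • lam0' := Subtype.ext <| calc
    (lam0 : Module.End R V) = lam0 ∘ₗ mu' ∘ₗ lam0' :=
      (comp_comp_eq_self_of_trace_comp_eq_one hH hker' htr' hker).symm
    _ = t • (lam0' : Module.End R V) := comp_eq_trace_smul_of_range_le hL hcomp_range hrange'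
  have hcomp : ξ ∘ₗ mu' ∘ₗ ζ = t • (ξ ∘ₗ mu ∘ₗ ζ) := calc
    ξ ∘ₗ mu' ∘ₗ ζ = (ξ ∘ₗ mu ∘ₗ lam0) ∘ₗ mu' ∘ₗ ζ := by
      rw [comp_comp_eq_self_of_trace_comp_eq_one hH hker htr hξ]
    _ = (ξ ∘ₗ mu) ∘ₗ (lam0 ∘ₗ mu') ∘ₗ ζ := rfl
    _ = t • (ξ ∘ₗ mu ∘ₗ ζ) := by
      rw [comp_eq_trace_smul_of_range_le hL hcomp_range hζ, LinearMap.comp_smul,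
        LinearMap.comp_assoc]
  rw [hcomp, ← TensorProduct.smul_tmul, ← hlam]

end RankOne

/-- The map `can` is independent of the choices made in its definition: for nonzero
`λ₀, λ₀' ∈ J` and `μ, μ' ∈ End_E(V)` with `trace(λ₀ ∘ μ) = trace(λ₀' ∘ μ') = 1`, and for all
`ξ ∈ I`, `ζ ∈ I'`, one has `λ₀' ⊗ (ξ ∘ μ' ∘ ζ) = λ₀ ⊗ (ξ ∘ μ ∘ ζ)` in `J ⊗_E End_E(V)`. -/
theorem stmt7 {E V : Type*} [Field E] [AddCommGroup V] [Module E V]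
    [FiniteDimensional E V] (hchar : (2 : E) ≠ 0)
    (B : LinearMap.BilinForm E V) (hB : B.Nondegenerate) (halt : B.IsAlt)
    (H : Submodule E V) (hH : Module.finrank E H + 1 = Module.finrank E V)
    (I I' J : Submodule E (Module.End E V))
    (hI : ∀ l : Module.End E V, l ∈ I ↔ H ≤ LinearMap.ker l)
    (hI' : ∀ l : Module.End E V, l ∈ I' ↔ LinearMap.range l ≤ B.orthogonal H)
    (hJ : J = I ⊓ I')
    (lam0 lam0' : Module.End E V) (hlam0J : lam0 ∈ J) (hlam0'J : lam0' ∈ J)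
    (hlam0 : lam0 ≠ 0) (hlam0' : lam0' ≠ 0)
    (mu mu' : Module.End E V)
    (htr : LinearMap.trace E V (lam0 ∘ₗ mu) = 1)
    (htr' : LinearMap.trace E V (lam0' ∘ₗ mu') = 1)
    (ξ ζ : Module.End E V) (hξ : ξ ∈ I) (hζ : ζ ∈ I') :
    ((⟨lam0', hlam0'J⟩ : ↥J) ⊗ₜ[E] (ξ ∘ₗ mu' ∘ₗ ζ) : ↥J ⊗[E] Module.End E V)
      = (⟨lam0, hlam0J⟩ : ↥J) ⊗ₜ[E] (ξ ∘ₗ mu ∘ₗ ζ) :=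
  stmt7_general (finrank_quotient_eq_one_of_finrank_add_one_eq hH)
    (finrank_orthogonal_eq_one_of_finrank_add_one_eq hB hH)
    (fun l hl => (hJ.le hl).imp (hI l).mp (hI' l).mp)
    ⟨lam0, hlam0J⟩ ⟨lam0', hlam0'J⟩ htr htr' ((hI ξ).mp hξ) ((hI' ζ).mp hζ)
end

section
/- The element e satisfies e * e = 0 and star e = −e, where star denotes quaternion conjugation. -/
open Quaternion

/-!
A quaternion `q` with `star q = -q` satisfies `q * q = -(star q * q)`, so its square is minus its
reduced norm, and `e` has reduced norm `a * b * (y ^ 2 - (a * x ^ 2 + b)) = 0`.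
-/

section ReducedNorm

variable {R : Type*} [CommRing R] {c₁ c₂ c₃ : R}

theorem quaternionAlgebra_star_eq_neg_iff {q : ℍ[R,c₁,c₂,c₃]} :
    star q = -q ↔ 2 * q.re + c₂ * q.imI = 0 := by
  rw [eq_neg_iff_add_eq_zero, QuaternionAlgebra.star_add_self', ← QuaternionAlgebra.coe_zero,
    QuaternionAlgebra.coe_inj]

/-- The reduced norm of a quaternion algebra, the quadratic form representing `star q * q`. It is
given in coordinates, for Mathlib's relations `i² = c₁ + c₂ i`, `j² = c₃`, `ij = k`,
`ji = c₂ j - k`. -/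
def reducedNorm (q : ℍ[R,c₁,c₂,c₃]) : R :=
  q.re ^ 2 + c₂ * q.re * q.imI - c₁ * q.imI ^ 2
    - c₃ * (q.imJ ^ 2 + c₂ * q.imJ * q.imK - c₁ * q.imK ^ 2)

theorem star_mul_self_eq_reducedNorm (q : ℍ[R,c₁,c₂,c₃]) : star q * q = ↑(reducedNorm q) := by
  rw [QuaternionAlgebra.star_mul_eq_coe, QuaternionAlgebra.coe_inj]
  simp only [QuaternionAlgebra.re_mul, QuaternionAlgebra.re_star, QuaternionAlgebra.imI_star,
    QuaternionAlgebra.imJ_star, QuaternionAlgebra.imK_star, reducedNorm]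
  ring

theorem mul_self_eq_neg_reducedNorm {q : ℍ[R,c₁,c₂,c₃]} (hq : star q = -q) :
    q * q = -↑(reducedNorm q) := by
  rw [← star_mul_self_eq_reducedNorm, hq, neg_mul, neg_neg]

end ReducedNorm

theorem stmt8_general {R : Type*} [CommRing R] (a b x y : R) (hxy : y ^ 2 = a * x ^ 2 + b) :
    (⟨0, b, a * x, y⟩ : ℍ[R,a,b]) * (⟨0, b, a * x, y⟩ : ℍ[R,a,b]) = 0 ∧
      star (⟨0, b, a * x, y⟩ : ℍ[R,a,b]) = -(⟨0, b, a * x, y⟩ : ℍ[R,a,b]) := by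
  set e : ℍ[R,a,b] := ⟨0, b, a * x, y⟩ with he
  have star_e : star e = -e := quaternionAlgebra_star_eq_neg_iff.mpr (by simp [he])
  have norm_e : reducedNorm e = 0 := calc
    reducedNorm e = a * b * (y ^ 2 - (a * x ^ 2 + b)) := by simp only [reducedNorm, he]; ring
    _ = 0 := by rw [hxy, sub_self, mul_zero]
  refine ⟨?_, star_e⟩
  rw [mul_self_eq_neg_reducedNorm star_e, norm_e, QuaternionAlgebra.coe_zero, neg_zero]

/-- In the quaternion algebra `ℍ[F,a,b]` (with `i² = a`, `j² = b`, `ij = -ji = k`),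
if `y² = a·x² + b` then `e = b·i + (a·x)·j + y·k` satisfies `e * e = 0` and
`star e = -e`, where `star` is quaternion conjugation. -/
theorem stmt8 {F : Type*} [Field F] (hchar : (2 : F) ≠ 0) (a b x y : F)
    (hxy : y ^ 2 = a * x ^ 2 + b) :
    (⟨0, b, a * x, y⟩ : ℍ[F, a, b]) * (⟨0, b, a * x, y⟩ : ℍ[F, a, b]) = 0 ∧
      star (⟨0, b, a * x, y⟩ : ℍ[F, a, b]) = -(⟨0, b, a * x, y⟩ : ℍ[F, a, b]) :=
  stmt8_general a b x y hxy
end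

section
/- Assume b ≠ 0. Then the left ideal {d * e | d ∈ ℍ[F,a,b]} generated by e equals the F-linear span of {j*e, (i*j)*e}; if moreover x ≠ 0, it also equals the F-linear span of {e, j*e}. -/
open Quaternion

/-!
Put `f = b + y j + x k`. Then `e = i f`, and moving `i` across `f` replaces `f` by its conjugate,
so `f e = f i f = i (star f) f = N(f) i` with `N(f) = b (b + a x² - y²) = 0`. Hence `f e = 0`, and
therefore also `e² = i f e = 0`. Expanded, these two equations are linear relations among the four
spanning vectors `e, i e, j e, k e` of the left ideal:
`b e + y (j e) + x (k e) = 0` and `b (i e) + a x (j e) + y (k e) = 0`.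
If `b` is invertible they eliminate `e` and `i e`; if `x` is invertible too, the first one lets `e`
replace `k e`.
-/

theorem span_one_i_j_k_eq_top {R : Type*} [CommRing R] (c₁ c₂ c₃ : R) :
    Submodule.span R {1, ⟨0, 1, 0, 0⟩, ⟨0, 0, 1, 0⟩, ⟨0, 0, 0, 1⟩}
      = (⊤ : Submodule R ℍ[R,c₁,c₂,c₃]) := by
  refine Submodule.eq_top_iff'.2 fun d => ?_
  simp only [Submodule.mem_span_insert, Submodule.mem_span_singleton]
  exact ⟨d.re, _, ⟨d.imI, _, ⟨d.imJ, _, ⟨d.imK, rfl⟩, rfl⟩, rfl⟩, by ext <;> simp⟩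

section ConicPoint

variable {R A : Type*} [CommRing R] [Ring A] [Algebra R A] {a b : R}

/-- The element `b i + a x j + y k` attached to a point `(x, y)` of the affine plane. For `(x, y)`
on the Severi–Brauer conic `y² = a x² + b` it generates the left ideal corresponding to that
point. -/
def conicPoint (q : QuaternionAlgebra.Basis A a 0 b) (x y : R) : A :=
  b • q.i + (a * x) • q.j + y • q.k

/-- The element `b + y j + x k`, which annihilates `conicPoint q x y` from the left when `(x, y)`
lies on the conic `y² = a x² + b`. -/
def conicAnnihilator (q : QuaternionAlgebra.Basis A a 0 b) (x y : R) : A :=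
  b • 1 + y • q.j + x • q.k

variable (q : QuaternionAlgebra.Basis A a 0 b) {x y : R} {e : A}

theorem i_mul_conicAnnihilator : q.i * conicAnnihilator q x y = conicPoint q x y := by
  simp only [conicAnnihilator, conicPoint, mul_add, mul_smul_comm, mul_one, q.i_mul_j, q.i_mul_k]
  module

theorem conicAnnihilator_mul_i :
    conicAnnihilator q x y * q.i = q.i * (b • 1 - y • q.j - x • q.k) := by
  simp only [conicAnnihilator, add_mul, mul_sub, smul_mul_assoc, mul_smul_comm, one_mul, mul_one,
    q.i_mul_j, q.i_mul_k, q.j_mul_i, q.k_mul_i]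
  module

theorem conj_mul_conicAnnihilator :
    (b • 1 - y • q.j - x • q.k) * conicAnnihilator q x y = (b * (b + a * x ^ 2 - y ^ 2)) • 1 := by
  simp only [conicAnnihilator, mul_add, sub_mul, smul_mul_assoc, mul_smul_comm, one_mul, mul_one,
    q.j_mul_j, q.j_mul_k, q.k_mul_j, q.k_mul_k]
  module

theorem conicAnnihilator_mul_conicPoint (hxy : y ^ 2 = a * x ^ 2 + b) :
    conicAnnihilator q x y * conicPoint q x y = 0 := by
  have norm_eq_zero : b * (b + a * x ^ 2 - y ^ 2) = 0 := by
    linear_combination -b * hxy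
  rw [← i_mul_conicAnnihilator, ← mul_assoc, conicAnnihilator_mul_i, mul_assoc,
    conj_mul_conicAnnihilator, norm_eq_zero, zero_smul, mul_zero]

variable {q}

theorem conicPoint_mul_eq_zero (h : conicAnnihilator q x y * e = 0) :
    conicPoint q x y * e = 0 := by
  rw [← i_mul_conicAnnihilator, mul_assoc, h, mul_zero]

theorem smul_eq_of_conicAnnihilator_mul_eq_zero (h : conicAnnihilator q x y * e = 0) :
    b • e = -y • (q.j * e) + -x • (q.k * e) := by
  simp only [conicAnnihilator, add_mul, smul_mul_assoc, one_mul] at h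
  linear_combination (norm := module) h

theorem smul_k_mul_eq_of_conicAnnihilator_mul_eq_zero (h : conicAnnihilator q x y * e = 0) :
    x • (q.k * e) = -b • e + -y • (q.j * e) := by
  linear_combination (norm := module) smul_eq_of_conicAnnihilator_mul_eq_zero h

theorem smul_i_mul_eq_of_conicPoint_mul_eq_zero (h : conicPoint q x y * e = 0) :
    b • (q.i * e) = -(a * x) • (q.j * e) + -y • (q.k * e) := by
  simp only [conicPoint, add_mul, smul_mul_assoc] at h
  linear_combination (norm := module) h

theorem range_mulRight_eq_span_of_span_eq_top
    (hq : Submodule.span R {1, q.i, q.j, q.k} = ⊤) (e : A) :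
    LinearMap.range (LinearMap.mulRight R e)
      = Submodule.span R {e, q.i * e, q.j * e, q.k * e} := by
  simp only [LinearMap.range_eq_map, ← hq, Submodule.map_span, Set.image_insert_eq,
    Set.image_singleton, LinearMap.mulRight_apply, one_mul]

theorem range_mulRight_eq_span_j_k (hq : Submodule.span R {1, q.i, q.j, q.k} = ⊤)
    (hb : IsUnit b) (h : conicAnnihilator q x y * e = 0) :
    LinearMap.range (LinearMap.mulRight R e) = Submodule.span R {q.j * e, q.k * e} := by
  have e_mem : e ∈ Submodule.span R {q.j * e, q.k * e} := by
    rw [← Submodule.smul_mem_iff_of_isUnit _ hb, Submodule.mem_span_pair]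
    exact ⟨-y, -x, (smul_eq_of_conicAnnihilator_mul_eq_zero h).symm⟩
  have i_mul_mem : q.i * e ∈ Submodule.span R {q.j * e, q.k * e} := by
    rw [← Submodule.smul_mem_iff_of_isUnit _ hb, Submodule.mem_span_pair]
    exact ⟨-(a * x), -y,
      (smul_i_mul_eq_of_conicPoint_mul_eq_zero (conicPoint_mul_eq_zero h)).symm⟩
  rw [range_mulRight_eq_span_of_span_eq_top hq, Set.insert_comm,
    Submodule.span_insert_eq_span (Submodule.span_mono (Set.subset_insert _ _) i_mul_mem),
    Submodule.span_insert_eq_span e_mem]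

theorem range_mulRight_eq_span_self_j (hq : Submodule.span R {1, q.i, q.j, q.k} = ⊤)
    (hb : IsUnit b) (hx : IsUnit x) (h : conicAnnihilator q x y * e = 0) :
    LinearMap.range (LinearMap.mulRight R e) = Submodule.span R {e, q.j * e} := by
  have k_mul_mem : q.k * e ∈ Submodule.span R {e, q.j * e} := by
    rw [← Submodule.smul_mem_iff_of_isUnit _ hx, Submodule.mem_span_pair]
    exact ⟨-b, -y, (smul_k_mul_eq_of_conicAnnihilator_mul_eq_zero h).symm⟩
  refine le_antisymm ?_ (Submodule.span_le.2 (Set.pair_subset ⟨1, one_mul e⟩ ⟨q.j, rfl⟩))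
  rw [range_mulRight_eq_span_j_k hq hb h, Submodule.span_le]
  exact Set.pair_subset (Submodule.subset_span (by simp)) k_mul_mem

end ConicPoint

theorem stmt9_general {R : Type*} [CommRing R] {a b x y : R}
    (hxy : y ^ 2 = a * x ^ 2 + b) (hb : IsUnit b)
    {i j e : ℍ[R,a,b]} (hi : i = ⟨0, 1, 0, 0⟩) (hj : j = ⟨0, 0, 1, 0⟩)
    (he : e = ⟨0, b, a * x, y⟩) :
    {t : ℍ[R,a,b] | ∃ d : ℍ[R,a,b], t = d * e}
        = ↑(Submodule.span R {j * e, (i * j) * e}) ∧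
      (IsUnit x →
        {t : ℍ[R,a,b] | ∃ d : ℍ[R,a,b], t = d * e}
          = ↑(Submodule.span R {e, j * e})) := by
  let q : QuaternionAlgebra.Basis ℍ[R,a,b] a 0 b := .self R
  obtain rfl : i = q.i := hi
  obtain rfl : j = q.j := hj
  have eq_conicPoint : e = conicPoint q x y := by
    rw [he]; ext <;> simp [conicPoint, q]
  have hq : Submodule.span R {1, q.i, q.j, q.k} = ⊤ := span_one_i_j_k_eq_top a 0 b
  have annihilates : conicAnnihilator q x y * e = 0 := by
    rw [eq_conicPoint, conicAnnihilator_mul_conicPoint q hxy]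
  have multiples_eq_range :
      {t | ∃ d, t = d * e} = (LinearMap.range (LinearMap.mulRight R e) : Set ℍ[R,a,b]) := by
    ext t; simp [eq_comm]
  rw [multiples_eq_range, q.i_mul_j, SetLike.coe_set_eq, SetLike.coe_set_eq]
  exact ⟨range_mulRight_eq_span_j_k hq hb annihilates,
    fun hx => range_mulRight_eq_span_self_j hq hb hx annihilates⟩

/-- In `ℍ[F,a,b]`, with `y² = a·x² + b`, `e = b·i + (a·x)·j + y·k` and `b ≠ 0`, the
left ideal `{d * e | d ∈ ℍ[F,a,b]}` equals the `F`-linear span of `{j*e, (i*j)*e}`;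
if moreover `x ≠ 0`, it also equals the `F`-linear span of `{e, j*e}`. -/
theorem stmt9 {F : Type*} [Field F] (hchar : (2 : F) ≠ 0) (a b x y : F)
    (hxy : y ^ 2 = a * x ^ 2 + b) (hb : b ≠ 0)
    (i j e : ℍ[F, a, b]) (hi : i = ⟨0, 1, 0, 0⟩) (hj : j = ⟨0, 0, 1, 0⟩)
    (he : e = ⟨0, b, a * x, y⟩) :
    {t : ℍ[F, a, b] | ∃ d : ℍ[F, a, b], t = d * e}
        = ↑(Submodule.span F {j * e, (i * j) * e}) ∧
      (x ≠ 0 →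
        {t : ℍ[F, a, b] | ∃ d : ℍ[F, a, b], t = d * e}
          = ↑(Submodule.span F {e, j * e})) := by
  simpa only [isUnit_iff_ne_zero] using stmt9_general hxy hb.isUnit hi hj he
end

section
/- The module of affine sections of the tautological sheaf and of the line bundle L are as follows: (1) the set of t ∈ ℍ[F,a,b] such that t has all four coordinates in R and t = d * e for some d ∈ ℍ[F,a,b] equals {d * e | d ∈ ℍ[R,a,b]}; (2) the set of t ∈ ℍ[F,a,b] such that t has all four coordinates in R and t = e·λ for some λ ∈ F equals {e·λ | λ ∈ R}. -/
open Polynomial Quaternion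

/-!
Let `e = b·i + (a·x)·j + y·k`. The relation `y² = a·x² + b` gives `j·e = (x·i − y)·e`, and every
quaternion is `z + w·j` with `z`, `w` in `F[i]`, so the left ideal generated by `e` is already
`F[i]·e`. The `F[i]`-component of `e` is `b·i`, hence that of `z·e` is `z·(b·i)`, which for
`z = s + t·i` is `a·b·t + b·s·i`. As `a` and `b` are units, `s` and `t` are integral as soon as
`z·e` is. Both descriptions follow, the second one because `F` is contained in `F[i]`.
-/

/-- The ring `ℍ[S, a, b]` inside `ℍ[F, a, b]`: the quaternions whose four coordinates lie in the
`k`-subalgebra `S` of `F`. Taking `a` and `b` in `k` ensures that `S` contains them. -/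
def integralQuaternions {k F : Type*} [CommRing k] [CommRing F] [Algebra k F]
    (S : Subalgebra k F) (a b : k) : Subalgebra k ℍ[F,algebraMap k F a,algebraMap k F b] where
  carrier := {d | d.re ∈ S ∧ d.imI ∈ S ∧ d.imJ ∈ S ∧ d.imK ∈ S}
  add_mem' := fun ⟨hr, hi, hj, hk⟩ ⟨hr', hi', hj', hk'⟩ =>
    ⟨S.add_mem hr hr', S.add_mem hi hi', S.add_mem hj hj', S.add_mem hk hk'⟩
  mul_mem' := by
    rintro d d' ⟨hr, hi, hj, hk⟩ ⟨hr', hi', hj', hk'⟩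
    refine ⟨?_, ?_, ?_, ?_⟩ <;>
      simp only [QuaternionAlgebra.re_mul, QuaternionAlgebra.imI_mul,
        QuaternionAlgebra.imJ_mul, QuaternionAlgebra.imK_mul] <;>
      apply_rules [S.add_mem, S.sub_mem, S.mul_mem, S.zero_mem, S.algebraMap_mem]
  algebraMap_mem' c := ⟨S.algebraMap_mem c, S.zero_mem, S.zero_mem, S.zero_mem⟩

/-- The quaternion `e = b·i + (a·x)·j + y·k` attached to a point `(x, y)` of the conic
`y² = a·x² + b`. It generates the fibre of the tautological sheaf as a left ideal and the fibre of
the line bundle as a line. -/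
def conicQuaternion {F : Type*} [CommRing F] (a b x y : F) : ℍ[F,a,b] :=
  ⟨0, b, a * x, y⟩

namespace conicQuaternion

section LeftIdeal

variable {F : Type*} [CommRing F] {a b x y : F}

theorem j_mul (hxy : y ^ 2 = a * x ^ 2 + b) :
    (⟨0, 0, 1, 0⟩ : ℍ[F,a,b]) * conicQuaternion a b x y =
      ⟨-y, x, 0, 0⟩ * conicQuaternion a b x y := by
  obtain rfl : b = y ^ 2 - a * x ^ 2 := eq_sub_of_add_eq' hxy.symm
  ext <;> simp [conicQuaternion] <;> ring

theorem exists_mul_eq_mk_mul (hxy : y ^ 2 = a * x ^ 2 + b) (d : ℍ[F,a,b]) :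
    ∃ s t : F, d * conicQuaternion a b x y = ⟨s, t, 0, 0⟩ * conicQuaternion a b x y := by
  set e := conicQuaternion a b x y
  let z : ℍ[F,a,b] := ⟨d.re, d.imI, 0, 0⟩
  let w : ℍ[F,a,b] := ⟨d.imJ, d.imK, 0, 0⟩
  have hd : d = z + w * ⟨0, 0, 1, 0⟩ := by ext <;> simp [z, w]
  refine ⟨d.re + (a * d.imK * x - d.imJ * y), d.imI + (d.imJ * x - d.imK * y), ?_⟩
  calc d * e = z * e + w * (⟨0, 0, 1, 0⟩ * e) := by rw [← mul_assoc, ← add_mul, ← hd]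
    _ = (z + w * ⟨-y, x, 0, 0⟩) * e := by rw [j_mul hxy, add_mul, mul_assoc]
    _ = _ := by congr 1; ext <;> simp [z, w] <;> ring

end LeftIdeal

section Integral

variable {k F : Type*} [CommRing k] [CommRing F] [Algebra k F] {S : Subalgebra k F} {a b : k}
  {x y : F}

theorem mem_integralQuaternions (hx : x ∈ S) (hy : y ∈ S) :
    conicQuaternion (algebraMap k F a) (algebraMap k F b) x y ∈ integralQuaternions S a b :=
  ⟨S.zero_mem, S.algebraMap_mem b, S.mul_mem (S.algebraMap_mem a) hx, hy⟩

theorem mk_mul_mem_integralQuaternions_iff (ha : IsUnit a) (hb : IsUnit b) (hx : x ∈ S) (hy : y ∈ S)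
    {s t : F} :
    ⟨s, t, 0, 0⟩ * conicQuaternion (algebraMap k F a) (algebraMap k F b) x y ∈
        integralQuaternions S a b ↔ s ∈ S ∧ t ∈ S := by
  refine ⟨fun ⟨hre, hI, _, _⟩ => ?_, fun ⟨hs, ht⟩ =>
    mul_mem ⟨hs, ht, S.zero_mem, S.zero_mem⟩ (mem_integralQuaternions hx hy)⟩
  have hbs : b • s ∈ S := by simpa [conicQuaternion, Algebra.smul_def, mul_comm] using hI
  have habt : (a * b) • t ∈ S := by
    simpa [conicQuaternion, Algebra.smul_def, mul_right_comm] using hre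
  exact ⟨(S.toSubmodule.smul_mem_iff' hb.unit).mp hbs,
    (S.toSubmodule.smul_mem_iff' (ha.mul hb).unit).mp habt⟩

theorem smul_mem_integralQuaternions_iff (ha : IsUnit a) (hb : IsUnit b) (hx : x ∈ S) (hy : y ∈ S)
    {c : F} :
    c • conicQuaternion (algebraMap k F a) (algebraMap k F b) x y ∈ integralQuaternions S a b ↔
      c ∈ S := by
  rw [← QuaternionAlgebra.coe_mul_eq_smul]
  exact (mk_mul_mem_integralQuaternions_iff ha hb hx hy).trans (and_iff_left S.zero_mem)

end Integral

end conicQuaternion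

theorem map_root_conic_sq {k F : Type*} [CommRing k] [CommRing F] [Algebra k F] {a b : k}
    {p : k[X][X]} (hp : p = X ^ 2 - C (C a * X ^ 2 + C b)) (φ : AdjoinRoot p →ₐ[k] F) :
    φ (AdjoinRoot.root p) ^ 2 =
      algebraMap k F a * φ (AdjoinRoot.of p X) ^ 2 + algebraMap k F b := by
  subst hp
  have hC (c : k) : φ (AdjoinRoot.of _ (C c)) = algebraMap k F c := φ.commutes c
  have hroot := AdjoinRoot.eval₂_root (X ^ 2 - C (C a * X ^ 2 + C b))
  simp only [eval₂_sub, eval₂_pow, eval₂_X, eval₂_C] at hroot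
  simpa only [map_add, map_mul, map_pow, hC] using congrArg φ (sub_eq_zero.mp hroot)

theorem stmt10_general {k F : Type*} [CommRing k] [CommRing F] [Algebra k F]
    (S : Subalgebra k F) {a b : k} (ha : IsUnit a) (hb : IsUnit b) {x y : F}
    (hx : x ∈ S) (hy : y ∈ S)
    (hxy : y ^ 2 = algebraMap k F a * x ^ 2 + algebraMap k F b)
    {e : ℍ[F,algebraMap k F a,algebraMap k F b]} (he : e = conicQuaternion _ _ x y) :
    ({t | t ∈ integralQuaternions S a b ∧ ∃ d, t = d * e} =
        {t | ∃ d ∈ integralQuaternions S a b, t = d * e}) ∧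
      ({t | t ∈ integralQuaternions S a b ∧ ∃ c : F, t = c • e} = {t | ∃ c ∈ S, t = c • e}) := by
  subst he
  constructor <;> ext q <;> constructor
  · rintro ⟨hq, d, rfl⟩
    obtain ⟨s, t, hst⟩ := conicQuaternion.exists_mul_eq_mk_mul hxy d
    rw [hst, conicQuaternion.mk_mul_mem_integralQuaternions_iff ha hb hx hy] at hq
    exact ⟨⟨s, t, 0, 0⟩, ⟨hq.1, hq.2, S.zero_mem, S.zero_mem⟩, hst⟩
  · rintro ⟨d, hd, rfl⟩
    exact ⟨mul_mem hd (conicQuaternion.mem_integralQuaternions hx hy), d, rfl⟩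
  · rintro ⟨hq, c, rfl⟩
    exact ⟨c, (conicQuaternion.smul_mem_integralQuaternions_iff ha hb hx hy).mp hq, rfl⟩
  · rintro ⟨c, hc, rfl⟩
    exact ⟨(conicQuaternion.smul_mem_integralQuaternions_iff ha hb hx hy).mpr hc, c, rfl⟩

/-- Let `R = k[X,Y]/(Y² − aX² − b)` (a domain, realized as `AdjoinRoot p`), `F` its fraction
field, `x, y ∈ R ⊆ F` the images of `X, Y`, and `e = b·i + (a·x)·j + y·k ∈ ℍ[F,a,b]`.
Writing `HR` for the subring of quaternions all of whose coordinates lie in `R`, one has: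
(1) `{t ∈ ℍ[R] as coords | ∃ d ∈ ℍ[F], t = d·e} = ℍ[R]·e`;
(2) `{t with coords in R | ∃ λ ∈ F, t = λ·e} = {λ·e | λ ∈ R}`. -/
theorem stmt10 {k : Type*} [Field k] (hchar : (2 : k) ≠ 0) (a b : k)
    (ha : a ≠ 0) (hb : b ≠ 0)
    (p : Polynomial (Polynomial k))
    (hp : p = X ^ 2 - C (C a * X ^ 2 + C b))
    (hIrr : Irreducible p) [IsDomain (AdjoinRoot p)]
    (F : Type*) [Field F] [Algebra (AdjoinRoot p) F] [IsFractionRing (AdjoinRoot p) F]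
    [Algebra k F] [IsScalarTower k (AdjoinRoot p) F]
    (x y : F)
    (hx : x = algebraMap (AdjoinRoot p) F (AdjoinRoot.of p X))
    (hy : y = algebraMap (AdjoinRoot p) F (AdjoinRoot.root p))
    (e : ℍ[F, algebraMap k F a, algebraMap k F b])
    (he : e = ⟨0, algebraMap k F b, algebraMap k F a * x, y⟩)
    (HR : Set ℍ[F, algebraMap k F a, algebraMap k F b])
    (hHR : ∀ d : ℍ[F, algebraMap k F a, algebraMap k F b],
      d ∈ HR ↔ (d.re ∈ (algebraMap (AdjoinRoot p) F).range ∧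
        d.imI ∈ (algebraMap (AdjoinRoot p) F).range ∧
        d.imJ ∈ (algebraMap (AdjoinRoot p) F).range ∧
        d.imK ∈ (algebraMap (AdjoinRoot p) F).range)) :
    ({t | t ∈ HR ∧ ∃ d, t = d * e} = {t | ∃ d ∈ HR, t = d * e}) ∧
      ({t | t ∈ HR ∧ ∃ lam : F, t = lam • e}
        = {t | ∃ r : AdjoinRoot p, t = algebraMap (AdjoinRoot p) F r • e}) := by
  let φ := IsScalarTower.toAlgHom k (AdjoinRoot p) F
  obtain rfl : HR = integralQuaternions φ.range a b := Set.ext hHR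
  subst hx hy
  simpa only [SetLike.mem_coe, AlgHom.mem_range, exists_exists_eq_and, φ,
    IsScalarTower.toAlgHom_apply] using
    stmt10_general φ.range ha.isUnit hb.isUnit (φ.mem_range_self _) (φ.mem_range_self _)
      (map_root_conic_sq hp φ) he
end

section
/- Assume in addition that D = ℍ[k,a,b] is a division ring (every nonzero quaternion over k is invertible). Let n ≥ 1 and let f = Σ_{α=0}^{n} c_α·x^α + Σ_{β=0}^{n−1} d_β·x^β·y ∈ R with c_α, d_β ∈ k and (c_n, d_{n−1}) ≠ (0, 0) (so that v_∞(f) = −n). Then the images of the elements e, e·x, …, e·x^{n−1} form a basis of the quotient of the right D-module e·ℍ[R,a,b] by the submodule f·(e·ℍ[R,a,b]), where D acts on e·ℍ[R,a,b] on the right through the inclusion ℍ[k,a,b] ⊆ ℍ[R,a,b]; that is, these n images are right-D-linearly independent modulo f·(e·ℍ[R,a,b]) and every element of e·ℍ[R,a,b] is congruent modulo f·(e·ℍ[R,a,b]) to a right D-linear combination of them. -/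
open Polynomial Quaternion

/-!
Let `D = ℍ[k,a,b]`. The coordinate ring is `R = k[x] ⊕ k[x]·y`, and `y·e = e·(j - x·i)`, so every
element of `e·ℍ[R,a,b]` has the form `e·q(x)` with `q ∈ D[X]`. The polynomial `q` is unique, since
the `y`-component of `e·q(x)` is `k·q(x)`. Under this identification of `e·ℍ[R,a,b]` with `D[X]`,
an element `f = u(x) + v(x)·y` of `R` acts as left multiplication by `g = u + v·(j - i·X)`. When
`v_∞(f) = -n`, this `g` has degree `n` and leading coefficient `c_n - d_{n-1}·i`, whose norm is
`c_n² - a·d_{n-1}²`; if that is a unit, division with remainder by `g` shows that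
`1, X, …, X^(n-1)` is a basis of `D[X]/g·D[X]`.
-/

section Division

variable {A : Type*} [Ring A] {g : A[X]}

theorem exists_eq_mul_add_of_isUnit_leadingCoeff [Nontrivial A] (hg : IsUnit g.leadingCoeff)
    (q : A[X]) : ∃ s r : A[X], q = g * s + r ∧ r.degree < g.degree := by
  have hmonic : (hg.unit⁻¹ • g).Monic := monic_of_isUnit_leadingCoeff_inv_smul hg
  refine ⟨(hg.unit⁻¹ • q) /ₘ (hg.unit⁻¹ • g),
    hg.unit • ((hg.unit⁻¹ • q) %ₘ (hg.unit⁻¹ • g)), ?_, ?_⟩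
  · calc q = hg.unit • hg.unit⁻¹ • q := (smul_inv_smul _ _).symm
      _ = hg.unit • ((hg.unit⁻¹ • q) %ₘ (hg.unit⁻¹ • g) +
            hg.unit⁻¹ • g * ((hg.unit⁻¹ • q) /ₘ (hg.unit⁻¹ • g))) := by rw [modByMonic_add_div]
      _ = g * ((hg.unit⁻¹ • q) /ₘ (hg.unit⁻¹ • g)) +
            hg.unit • ((hg.unit⁻¹ • q) %ₘ (hg.unit⁻¹ • g)) := by
          rw [smul_add, smul_mul_assoc, smul_inv_smul, add_comm]
  · calc (hg.unit • ((hg.unit⁻¹ • q) %ₘ (hg.unit⁻¹ • g))).degree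
        ≤ ((hg.unit⁻¹ • q) %ₘ (hg.unit⁻¹ • g)).degree := degree_smul_le _ _
      _ < (hg.unit⁻¹ • g).degree := degree_modByMonic_lt _ hmonic
      _ ≤ g.degree := degree_smul_le _ _

theorem mul_eq_zero_of_degree_lt_of_isUnit_leadingCoeff (hg : IsUnit g.leadingCoeff) {s : A[X]}
    (hlt : (g * s).degree < g.degree) : g * s = 0 := by
  by_contra hne
  have hs : g.leadingCoeff * s.leadingCoeff ≠ 0 := by
    rw [ne_eq, hg.mul_right_eq_zero, leadingCoeff_eq_zero]
    exact right_ne_zero_of_mul hne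
  have hs' : (0 : WithBot ℕ) ≤ s.degree := zero_le_degree_iff.mpr (right_ne_zero_of_mul hne)
  rw [degree_mul' hs] at hlt
  exact hlt.not_ge (le_add_of_nonneg_right hs')

theorem exists_eq_mul_add_ofFn_of_isUnit_leadingCoeff [Nontrivial A] [DecidableEq A] {n : ℕ}
    (hn : g.natDegree = n) (hg : IsUnit g.leadingCoeff) (q : A[X]) :
    ∃ (s : A[X]) (c : Fin n → A), q = g * s + ofFn n c := by
  obtain ⟨s, r, hq, hr⟩ := exists_eq_mul_add_of_isUnit_leadingCoeff hg q
  have hr_lt : r.degree < n := hn ▸ hr.trans_le degree_le_natDegree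
  refine ⟨s, toFn n r, ?_⟩
  suffices h : ofFn n (toFn n r) = r by rw [h, hq]
  ext i
  rcases lt_or_ge i n with hi | hi
  · simp [hi, toFn]
  · rw [ofFn_coeff_eq_zero_of_ge _ hi,
      coeff_eq_zero_of_degree_lt (hr_lt.trans_le (Nat.cast_le.mpr hi))]

theorem eq_zero_of_ofFn_eq_mul_of_isUnit_leadingCoeff [Nontrivial A] [DecidableEq A] {n : ℕ}
    (hn : g.natDegree = n) (hg : IsUnit g.leadingCoeff) {c : Fin n → A} {s : A[X]}
    (h : ofFn n c = g * s) : c = 0 := by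
  have hg0 : g ≠ 0 := leadingCoeff_ne_zero.mp hg.ne_zero
  have hlt : (g * s).degree < g.degree := by
    rw [← h, degree_eq_natDegree hg0, hn]
    exact ofFn_degree_lt c
  apply injective_ofFn n
  rw [h, mul_eq_zero_of_degree_lt_of_isUnit_leadingCoeff hg hlt, map_zero]

end Division

section AdjoinRoot

variable {S : Type*} [CommRing S] {p : S[X]}

theorem adjoinRoot_exists_eq_of_add_of_mul_root (hp : p.Monic) (hdeg : p.natDegree = 2)
    (r : AdjoinRoot p) :
    ∃ u v : S, r = AdjoinRoot.of p u + AdjoinRoot.of p v * AdjoinRoot.root p := by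
  have hle : (AdjoinRoot.modByMonicHom hp r).natDegree ≤ 1 := by
    obtain ⟨P, rfl⟩ := AdjoinRoot.mk_surjective r
    have hlt := natDegree_modByMonic_lt P hp (by rintro rfl; simp at hdeg)
    rw [AdjoinRoot.modByMonicHom_mk]
    omega
  obtain ⟨v, u, huv⟩ := exists_eq_X_add_C_of_natDegree_le_one hle
  refine ⟨u, v, ?_⟩
  rw [← AdjoinRoot.mk_leftInverse hp r, huv, map_add, map_mul, AdjoinRoot.mk_C, AdjoinRoot.mk_C,
    AdjoinRoot.mk_X, add_comm]

theorem adjoinRoot_of_add_of_mul_root_eq_zero_iff (hp : p.Monic) (hdeg : p.natDegree = 2)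
    {u v : S} : AdjoinRoot.of p u + AdjoinRoot.of p v * AdjoinRoot.root p = 0 ↔ u = 0 ∧ v = 0 := by
  refine ⟨fun h => ?_, by rintro ⟨rfl, rfl⟩; simp⟩
  have hmk : AdjoinRoot.mk p (C v * X + C u) = 0 := by
    rw [map_add, map_mul, AdjoinRoot.mk_C, AdjoinRoot.mk_C, AdjoinRoot.mk_X, add_comm, h]
  have hzero : C v * X + C u = 0 := by
    by_contra hne
    exact hp.not_dvd_of_natDegree_lt hne (by have := natDegree_linear_le (a := v) (b := u); omega)
      (AdjoinRoot.mk_eq_zero.mp hmk)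
  exact ⟨by simpa using congrArg (coeff · 0) hzero, by simpa using congrArg (coeff · 1) hzero⟩

end AdjoinRoot

section Evaluation

variable {k F : Type*} [CommRing k] [CommRing F] [Algebra k F] (a b : k)

/-- The inclusion `ℍ[k,a,b] → ℍ[F,a,b]` of quaternion algebras induced by `k → F`. -/
def quaternionBaseChange : ℍ[k,a,b] →ₐ[k] ℍ[F,algebraMap k F a,algebraMap k F b] where
  toFun q := ⟨algebraMap k F q.re, algebraMap k F q.imI, algebraMap k F q.imJ,
    algebraMap k F q.imK⟩
  map_one' := by ext <;> simp
  map_zero' := by ext <;> simp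
  map_mul' p q := by ext <;> simp
  map_add' p q := by ext <;> simp
  commutes' c := by ext <;> simp [Algebra.algebraMap_eq_smul_one]

variable (x : F)

/-- Evaluation of polynomials over `ℍ[k,a,b]` at the central element `x` of `ℍ[F,a,b]`. -/
noncomputable def evalCentral :
    ℍ[k,a,b][X] →ₐ[k] ℍ[F,algebraMap k F a,algebraMap k F b] :=
  eval₂AlgHom (quaternionBaseChange a b) (x : ℍ[F,algebraMap k F a,algebraMap k F b])
    fun _ => (QuaternionAlgebra.coe_commutes x _).symm

variable {a b}

theorem evalCentral_C (q : ℍ[k,a,b]) :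
    evalCentral a b x (C q) = quaternionBaseChange a b q :=
  eval₂_C _ _

theorem evalCentral_X :
    evalCentral a b x X = (x : ℍ[F,algebraMap k F a,algebraMap k F b]) :=
  eval₂_X _ _

theorem evalCentral_C_mul_X_pow (q : ℍ[k,a,b]) (m : ℕ) :
    evalCentral a b x (C q * X ^ m) = x ^ m • quaternionBaseChange a b q := by
  rw [map_mul, map_pow, evalCentral_C, evalCentral_X, ← QuaternionAlgebra.coe_pow,
    QuaternionAlgebra.mul_coe_eq_smul]

theorem evalCentral_map (u : k[X]) :
    evalCentral a b x (u.map (algebraMap k ℍ[k,a,b])) =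
      algebraMap F ℍ[F,algebraMap k F a,algebraMap k F b] (aeval x u) := by
  have h : (evalCentral a b x).comp (mapAlgHom (Algebra.ofId k ℍ[k,a,b])) =
      (Algebra.ofId F _ |>.restrictScalars k).comp (aeval x) := by
    ext1
    simp [evalCentral_X, Algebra.ofId_apply, QuaternionAlgebra.coe_algebraMap]
  exact DFunLike.congr_fun h u

/-- The identification of quaternions over `k[X]` with polynomials over `ℍ[k,a,b]`. -/
noncomputable def ofCoordinates (q : ℍ[k[X],C a,C b]) : ℍ[k,a,b][X] :=
  q.re.map (algebraMap k ℍ[k,a,b]) + q.imI.map (algebraMap k ℍ[k,a,b]) * C ⟨0, 1, 0, 0⟩ +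
    q.imJ.map (algebraMap k ℍ[k,a,b]) * C ⟨0, 0, 1, 0⟩ +
    q.imK.map (algebraMap k ℍ[k,a,b]) * C ⟨0, 0, 0, 1⟩

theorem evalCentral_ofCoordinates (q : ℍ[k[X],C a,C b]) :
    evalCentral a b x (ofCoordinates q) =
      ⟨aeval x q.re, aeval x q.imI, aeval x q.imJ, aeval x q.imK⟩ := by
  simp only [ofCoordinates, map_add, map_mul, evalCentral_map, evalCentral_C,
    QuaternionAlgebra.coe_algebraMap, QuaternionAlgebra.coe_mul_eq_smul]
  ext <;> simp [quaternionBaseChange]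

theorem ofCoordinates_surjective :
    Function.Surjective (ofCoordinates : ℍ[k[X],C a,C b] → ℍ[k,a,b][X]) := by
  intro q
  induction q using Polynomial.induction_on' with
  | add p q hp hq =>
    obtain ⟨p, rfl⟩ := hp
    obtain ⟨q, rfl⟩ := hq
    refine ⟨p + q, ?_⟩
    simp only [ofCoordinates, QuaternionAlgebra.re_add, QuaternionAlgebra.imI_add,
      QuaternionAlgebra.imJ_add, QuaternionAlgebra.imK_add, Polynomial.map_add, add_mul]
    abel
  | monomial m c =>
    refine ⟨⟨monomial m c.re, monomial m c.imI, monomial m c.imJ, monomial m c.imK⟩, ?_⟩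
    simp only [ofCoordinates, map_monomial, monomial_mul_C, ← map_add]
    congr 1
    ext <;> simp [Algebra.algebraMap_eq_smul_one]

variable (a b) in
/-- The quaternion `e = b·i + (a·x)·j + y·k`, which generates the right ideal `e·ℍ[R,a,b]`. -/
def conicElement (y : F) : ℍ[F,algebraMap k F a,algebraMap k F b] :=
  ⟨0, algebraMap k F b, algebraMap k F a * x, y⟩

theorem conicElement_eq (y : F) :
    conicElement a b x y = evalCentral a b x (ofCoordinates ⟨0, C b, C a * X, 0⟩) +
      y • evalCentral a b x (C ⟨0, 0, 0, 1⟩) := by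
  rw [evalCentral_ofCoordinates, evalCentral_C]
  ext <;> simp [conicElement, quaternionBaseChange]

/-- The polynomial `g = u + v·(j - i·X)` over `ℍ[k,a,b]` such that multiplication by
`u(x) + v(x)·y` on the right module generated by `conicElement a b x y` corresponds to left
multiplication by `g`; the factor `j - i·X` comes from `y·e = e·(j - x·i)`. -/
noncomputable def actionPolynomial (a b : k) (u v : k[X]) : ℍ[k,a,b][X] :=
  u.map (algebraMap k ℍ[k,a,b]) +
    v.map (algebraMap k ℍ[k,a,b]) * (C ⟨0, 0, 1, 0⟩ - C ⟨0, 1, 0, 0⟩ * X)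

theorem natDegree_actionPolynomial_le {u v : k[X]} {m : ℕ} (hu : u.natDegree ≤ m + 1)
    (hv : v.natDegree ≤ m) : (actionPolynomial a b u v).natDegree ≤ m + 1 := by
  refine natDegree_add_le_of_degree_le (natDegree_map_le.trans hu)
    (natDegree_mul_le_of_le (natDegree_map_le.trans hv) ?_)
  compute_degree

theorem coeff_succ_actionPolynomial {u v : k[X]} {m : ℕ} (hv : v.natDegree ≤ m) :
    (actionPolynomial a b u v).coeff (m + 1) = ⟨u.coeff (m + 1), -v.coeff m, 0, 0⟩ := by
  have hv' : v.coeff (m + 1) = 0 := coeff_eq_zero_of_natDegree_lt (Nat.lt_succ_of_le hv)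
  rw [actionPolynomial, coeff_add, mul_sub, coeff_sub, coeff_mul_C, ← mul_assoc, coeff_mul_X,
    coeff_mul_C, coeff_map, coeff_map, coeff_map, hv']
  ext <;> simp

theorem isUnit_mk_zero_zero_iff {c d : k} :
    IsUnit (⟨c, d, 0, 0⟩ : ℍ[k,a,b]) ↔ IsUnit (c ^ 2 - a * d ^ 2) := by
  generalize hr : c ^ 2 - a * d ^ 2 = r
  have hnorm : (⟨c, d, 0, 0⟩ * star ⟨c, d, 0, 0⟩ : ℍ[k,a,b]) = algebraMap k _ r := by
    rw [QuaternionAlgebra.coe_algebraMap, QuaternionAlgebra.star_mk, QuaternionAlgebra.mk_mul_mk]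
    ext
    · rw [QuaternionAlgebra.re_coe]
      linear_combination hr
    · rw [QuaternionAlgebra.imI_coe]
      ring
    · simp
    · simp
  refine ⟨fun h => ?_, fun h => ?_⟩
  · obtain ⟨z, hz⟩ := (hnorm ▸ h.mul h.star).exists_right_inv
    refine IsUnit.of_mul_eq_one z.re ?_
    rw [← Algebra.smul_def] at hz
    simpa using congrArg QuaternionAlgebra.re hz
  · have hcomm : Commute (⟨c, d, 0, 0⟩ : ℍ[k,a,b]) (star ⟨c, d, 0, 0⟩) := by
      ext <;> simp [mul_comm]
    exact (hcomm.isUnit_mul_iff.mp (hnorm ▸ h.map (algebraMap k _))).1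

theorem isUnit_coeff_succ_actionPolynomial {u v : k[X]} {m : ℕ} (hv : v.natDegree ≤ m)
    (h : IsUnit (u.coeff (m + 1) ^ 2 - a * v.coeff m ^ 2)) :
    IsUnit ((actionPolynomial a b u v).coeff (m + 1)) := by
  rwa [coeff_succ_actionPolynomial hv, isUnit_mk_zero_zero_iff, neg_sq]

theorem natDegree_actionPolynomial_eq [Nontrivial k] {u v : k[X]} {m : ℕ}
    (hu : u.natDegree ≤ m + 1) (hv : v.natDegree ≤ m)
    (h : IsUnit (u.coeff (m + 1) ^ 2 - a * v.coeff m ^ 2)) :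
    (actionPolynomial a b u v).natDegree = m + 1 :=
  natDegree_eq_of_le_of_coeff_ne_zero (natDegree_actionPolynomial_le hu hv)
    (isUnit_coeff_succ_actionPolynomial hv h).ne_zero

theorem isUnit_leadingCoeff_actionPolynomial [Nontrivial k] {u v : k[X]} {m : ℕ}
    (hu : u.natDegree ≤ m + 1) (hv : v.natDegree ≤ m)
    (h : IsUnit (u.coeff (m + 1) ^ 2 - a * v.coeff m ^ 2)) :
    IsUnit (actionPolynomial a b u v).leadingCoeff := by
  rw [leadingCoeff, natDegree_actionPolynomial_eq hu hv h]
  exact isUnit_coeff_succ_actionPolynomial hv h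

theorem eq_zero_of_basis_k_mul_eq_zero (hab : a * b ∈ nonZeroDivisors k) {q : ℍ[k,a,b]}
    (h : ⟨0, 0, 0, 1⟩ * q = 0) : q = 0 := by
  have hsmul : (a * b) • q = 0 := by
    calc (a * b) • q = -(⟨0, 0, 0, 1⟩ * (⟨0, 0, 0, 1⟩ * q)) := by ext <;> simp <;> ring
      _ = 0 := by rw [h, mul_zero, neg_zero]
  have hcoord {c : k} (hc : a * b * c = 0) : c = 0 :=
    (mul_left_mem_nonZeroDivisors_eq_zero_iff hab).mp hc
  ext
  · exact hcoord (congrArg QuaternionAlgebra.re hsmul)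
  · exact hcoord (congrArg QuaternionAlgebra.imI hsmul)
  · exact hcoord (congrArg QuaternionAlgebra.imJ hsmul)
  · exact hcoord (congrArg QuaternionAlgebra.imK hsmul)

theorem smul_conicElement {y : F} (hxy : y ^ 2 = algebraMap k F a * x ^ 2 + algebraMap k F b) :
    y • conicElement a b x y =
      conicElement a b x y * evalCentral a b x (C ⟨0, 0, 1, 0⟩ - C ⟨0, 1, 0, 0⟩ * X) := by
  rw [map_sub, map_mul, evalCentral_C, evalCentral_C, evalCentral_X,
    QuaternionAlgebra.mul_coe_eq_smul]
  simp only [conicElement, quaternionBaseChange, AlgHom.coe_mk, RingHom.coe_mk, MonoidHom.coe_mk,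
    OneHom.coe_mk, map_zero, map_one, QuaternionAlgebra.smul_mk, QuaternionAlgebra.mk_sub_mk,
    QuaternionAlgebra.mk_mul_mk, smul_eq_mul, QuaternionAlgebra.mk.injEq]
  refine ⟨?_, ?_, ?_, ?_⟩
  · ring
  · ring
  · ring
  · linear_combination hxy

theorem smul_conicElement_eq_mul_actionPolynomial {y : F}
    (hxy : y ^ 2 = algebraMap k F a * x ^ 2 + algebraMap k F b) (u v : k[X]) :
    (aeval x u + aeval x v * y) • conicElement a b x y =
      conicElement a b x y * evalCentral a b x (actionPolynomial a b u v) := by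
  rw [actionPolynomial, map_add, map_mul, evalCentral_map, evalCentral_map, mul_add, add_smul,
    mul_smul, smul_conicElement x hxy, ← Algebra.commutes, ← Algebra.smul_def,
    ← Algebra.smul_def, mul_smul_comm]

theorem aeval_ofFn [DecidableEq k] {n : ℕ} (c : Fin n → k) :
    aeval x (ofFn n c) = ∑ i : Fin n, algebraMap k F (c i) * x ^ (i : ℕ) := by
  simp only [ofFn_eq_sum_monomial, map_sum, aeval_monomial]

theorem sum_smul_conicElement_mul [DecidableEq ℍ[k,a,b]] (y : F) {n : ℕ}
    (c : Fin n → ℍ[k,a,b]) :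
    ∑ i : Fin n, (x ^ (i : ℕ) • conicElement a b x y) * quaternionBaseChange a b (c i) =
      conicElement a b x y * evalCentral a b x (ofFn n c) := by
  simp only [ofFn_eq_sum_monomial, map_sum, ← C_mul_X_pow_eq_monomial, evalCentral_C_mul_X_pow,
    Finset.mul_sum, smul_mul_assoc, mul_smul_comm]

end Evaluation

/-- `R` is the coordinate ring `k[x, y]` of the conic `y² = a·x² + b`, with coordinate functions
`x` and `y`: it is free over `k[x]` with basis `1, y`. -/
structure IsConicRing {k F : Type*} [CommRing k] [CommRing F] [Algebra k F] (a b : k) (x y : F)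
    (R : Subring F) : Prop where
  sq_eq : y ^ 2 = algebraMap k F a * x ^ 2 + algebraMap k F b
  mem_iff (z : F) : z ∈ R ↔ ∃ u v : k[X], z = aeval x u + aeval x v * y
  eq_zero (u v : k[X]) : aeval x u + aeval x v * y = 0 → u = 0 ∧ v = 0

/-- The subring `ℍ[R,a,b]` of `ℍ[F,a,b]`, as a set: the quaternions with all coordinates in `R`. -/
def quaternionsOver {F : Type*} [CommRing F] {a b : F} (R : Subring F) : Set ℍ[F,a,b] :=
  {d | d.re ∈ R ∧ d.imI ∈ R ∧ d.imJ ∈ R ∧ d.imK ∈ R}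

namespace IsConicRing

variable {k F : Type*} [CommRing k] [CommRing F] [Algebra k F] {a b : k} {x y : F} {R : Subring F}

theorem evalCentral_add_smul_eq_zero (hR : IsConicRing a b x y R) {P Q : ℍ[k,a,b][X]}
    (h : evalCentral a b x P + y • evalCentral a b x Q = 0) : P = 0 ∧ Q = 0 := by
  obtain ⟨P, rfl⟩ := ofCoordinates_surjective P
  obtain ⟨Q, rfl⟩ := ofCoordinates_surjective Q
  simp only [evalCentral_ofCoordinates, QuaternionAlgebra.smul_mk, QuaternionAlgebra.mk_add_mk,
    smul_eq_mul, mul_comm y, QuaternionAlgebra.ext_iff, QuaternionAlgebra.re_zero,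
    QuaternionAlgebra.imI_zero, QuaternionAlgebra.imJ_zero, QuaternionAlgebra.imK_zero] at h
  obtain ⟨h₀, h₁, h₂, h₃⟩ := h
  simp [ofCoordinates, hR.eq_zero _ _ h₀, hR.eq_zero _ _ h₁, hR.eq_zero _ _ h₂,
    hR.eq_zero _ _ h₃]

theorem exists_eq_evalCentral_add_smul (hR : IsConicRing a b x y R)
    {d : ℍ[F,algebraMap k F a,algebraMap k F b]} (hd : d ∈ quaternionsOver R) :
    ∃ P Q : ℍ[k,a,b][X], d = evalCentral a b x P + y • evalCentral a b x Q := by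
  simp only [quaternionsOver, Set.mem_ofPred_eq, hR.mem_iff] at hd
  obtain ⟨⟨u₀, v₀, h₀⟩, ⟨u₁, v₁, h₁⟩, ⟨u₂, v₂, h₂⟩, ⟨u₃, v₃, h₃⟩⟩ := hd
  refine ⟨ofCoordinates ⟨u₀, u₁, u₂, u₃⟩, ofCoordinates ⟨v₀, v₁, v₂, v₃⟩, ?_⟩
  rw [evalCentral_ofCoordinates, evalCentral_ofCoordinates]
  ext <;> simp [h₀, h₁, h₂, h₃, mul_comm y]

theorem evalCentral_mem_quaternionsOver (hR : IsConicRing a b x y R) (q : ℍ[k,a,b][X]) :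
    evalCentral a b x q ∈ quaternionsOver R := by
  have haeval (u : k[X]) : aeval x u ∈ R := (hR.mem_iff _).mpr ⟨u, 0, by simp⟩
  obtain ⟨q, rfl⟩ := ofCoordinates_surjective q
  rw [evalCentral_ofCoordinates]
  exact ⟨haeval _, haeval _, haeval _, haeval _⟩

theorem exists_conicElement_mul_eq (hR : IsConicRing a b x y R)
    {d : ℍ[F,algebraMap k F a,algebraMap k F b]} (hd : d ∈ quaternionsOver R) :
    ∃ q : ℍ[k,a,b][X], conicElement a b x y * d = conicElement a b x y * evalCentral a b x q := by
  obtain ⟨P, Q, rfl⟩ := hR.exists_eq_evalCentral_add_smul hd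
  refine ⟨P + (C ⟨0, 0, 1, 0⟩ - C ⟨0, 1, 0, 0⟩ * X) * Q, ?_⟩
  rw [mul_add, mul_smul_comm, ← smul_mul_assoc, smul_conicElement x hR.sq_eq, mul_assoc,
    ← map_mul, ← mul_add, ← map_add]

theorem smul_conicElement_mul_evalCentral (hR : IsConicRing a b x y R) (u v : k[X])
    (q : ℍ[k,a,b][X]) :
    (aeval x u + aeval x v * y) • (conicElement a b x y * evalCentral a b x q) =
      conicElement a b x y * evalCentral a b x (actionPolynomial a b u v * q) := by
  rw [← smul_mul_assoc, smul_conicElement_eq_mul_actionPolynomial x hR.sq_eq, map_mul, mul_assoc]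

theorem conicElement_mul_evalCentral_injective (hR : IsConicRing a b x y R)
    (hab : a * b ∈ nonZeroDivisors k) :
    Function.Injective fun q : ℍ[k,a,b][X] => conicElement a b x y * evalCentral a b x q := by
  intro P Q hPQ
  have hzero : conicElement a b x y * evalCentral a b x (P - Q) = 0 := by
    rw [map_sub, mul_sub]
    exact sub_eq_zero.mpr hPQ
  rw [conicElement_eq, add_mul, smul_mul_assoc, ← map_mul, ← map_mul] at hzero
  have hk : C ⟨0, 0, 0, 1⟩ * (P - Q) = 0 := (hR.evalCentral_add_smul_eq_zero hzero).2
  refine sub_eq_zero.mp (Polynomial.ext fun m => eq_zero_of_basis_k_mul_eq_zero hab ?_)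
  rw [← coeff_C_mul, hk, coeff_zero]

theorem exists_conicElement_mul_sub_sum_eq [Nontrivial k] (hR : IsConicRing a b x y R)
    {u v : k[X]} {n : ℕ}
    (hdeg : (actionPolynomial a b u v).natDegree = n)
    (hunit : IsUnit (actionPolynomial a b u v).leadingCoeff)
    {d : ℍ[F,algebraMap k F a,algebraMap k F b]} (hd : d ∈ quaternionsOver R) :
    ∃ c : Fin n → ℍ[k,a,b], ∃ d' ∈ quaternionsOver R,
      conicElement a b x y * d -
          ∑ i : Fin n, (x ^ (i : ℕ) • conicElement a b x y) * quaternionBaseChange a b (c i) =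
        (aeval x u + aeval x v * y) • (conicElement a b x y * d') := by
  classical
  obtain ⟨q, hq⟩ := hR.exists_conicElement_mul_eq hd
  obtain ⟨s, c, rfl⟩ := exists_eq_mul_add_ofFn_of_isUnit_leadingCoeff hdeg hunit q
  refine ⟨c, _, hR.evalCentral_mem_quaternionsOver s, ?_⟩
  rw [hq, sum_smul_conicElement_mul, hR.smul_conicElement_mul_evalCentral, map_add, mul_add,
    add_sub_cancel_right]

theorem eq_zero_of_sum_smul_conicElement_mul_eq [Nontrivial k] (hR : IsConicRing a b x y R)
    (hab : a * b ∈ nonZeroDivisors k) {u v : k[X]} {n : ℕ}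
    (hdeg : (actionPolynomial a b u v).natDegree = n)
    (hunit : IsUnit (actionPolynomial a b u v).leadingCoeff)
    {d : ℍ[F,algebraMap k F a,algebraMap k F b]} (hd : d ∈ quaternionsOver R)
    {c : Fin n → ℍ[k,a,b]}
    (hc : ∑ i : Fin n, (x ^ (i : ℕ) • conicElement a b x y) * quaternionBaseChange a b (c i) =
      (aeval x u + aeval x v * y) • (conicElement a b x y * d)) : c = 0 := by
  classical
  obtain ⟨s, hs⟩ := hR.exists_conicElement_mul_eq hd
  rw [hs, sum_smul_conicElement_mul, hR.smul_conicElement_mul_evalCentral] at hc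
  exact eq_zero_of_ofFn_eq_mul_of_isUnit_leadingCoeff hdeg hunit
    (hR.conicElement_mul_evalCentral_injective hab hc)

end IsConicRing

section CoordinateRing

variable {k F : Type*} [CommRing k] [CommRing F] [Algebra k F] {p : k[X][X]}
  [Algebra (AdjoinRoot p) F] [IsScalarTower k (AdjoinRoot p) F]

theorem aeval_algebraMap_adjoinRoot_of_X (u : k[X]) :
    aeval (algebraMap (AdjoinRoot p) F (AdjoinRoot.of p X)) u =
      algebraMap (AdjoinRoot p) F (AdjoinRoot.of p u) := by
  rw [aeval_algebraMap_apply, ← AdjoinRoot.algebraMap_eq, aeval_algebraMap_apply,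
    aeval_X_left_apply]

theorem isConicRing_range_algebraMap_adjoinRoot [Nontrivial k] [FaithfulSMul (AdjoinRoot p) F]
    {a b : k} (hp : p = X ^ 2 - C (C a * X ^ 2 + C b)) :
    IsConicRing a b (algebraMap (AdjoinRoot p) F (AdjoinRoot.of p X))
      (algebraMap (AdjoinRoot p) F (AdjoinRoot.root p)) (algebraMap (AdjoinRoot p) F).range := by
  have hmonic : p.Monic := hp ▸ monic_X_pow_sub_C _ two_ne_zero
  have hdeg : p.natDegree = 2 := hp ▸ natDegree_X_pow_sub_C
  refine ⟨?_, fun z => ?_, fun u v h => ?_⟩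
  · have hroot : AdjoinRoot.root p ^ 2 = AdjoinRoot.of p (C a * X ^ 2 + C b) := by
      have hmk : AdjoinRoot.mk p (X ^ 2 - C (C a * X ^ 2 + C b)) = 0 := by
        rw [← hp, AdjoinRoot.mk_self]
      rwa [map_sub, map_pow, AdjoinRoot.mk_X, AdjoinRoot.mk_C, sub_eq_zero] at hmk
    rw [← map_pow, hroot, ← aeval_algebraMap_adjoinRoot_of_X]
    simp
  · simp only [aeval_algebraMap_adjoinRoot_of_X, ← map_mul, ← map_add]
    constructor
    · rintro ⟨r, rfl⟩
      obtain ⟨u, v, rfl⟩ := adjoinRoot_exists_eq_of_add_of_mul_root hmonic hdeg r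
      exact ⟨u, v, rfl⟩
    · rintro ⟨u, v, rfl⟩
      exact ⟨_, rfl⟩
  · rwa [aeval_algebraMap_adjoinRoot_of_X, aeval_algebraMap_adjoinRoot_of_X, ← map_mul, ← map_add,
      FaithfulSMul.algebraMap_eq_zero_iff, adjoinRoot_of_add_of_mul_root_eq_zero_iff hmonic
        hdeg] at h

end CoordinateRing

theorem stmt11_general {k : Type*} [CommRing k] [Nontrivial k] (a b : k)
    (hab : a * b ∈ nonZeroDivisors k)
    (p : Polynomial (Polynomial k))
    (hp : p = X ^ 2 - C (C a * X ^ 2 + C b))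
    (F : Type*) [CommRing F] [Algebra (AdjoinRoot p) F] [FaithfulSMul (AdjoinRoot p) F]
    [Algebra k F] [IsScalarTower k (AdjoinRoot p) F]
    (x y : F)
    (hx : x = algebraMap (AdjoinRoot p) F (AdjoinRoot.of p X))
    (hy : y = algebraMap (AdjoinRoot p) F (AdjoinRoot.root p))
    (e : ℍ[F,algebraMap k F a,algebraMap k F b])
    (he : e = ⟨0, algebraMap k F b, algebraMap k F a * x, y⟩)
    (HR : Set ℍ[F,algebraMap k F a,algebraMap k F b])
    (hHR : ∀ d : ℍ[F,algebraMap k F a,algebraMap k F b],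
      d ∈ HR ↔ (d.re ∈ (algebraMap (AdjoinRoot p) F).range ∧
        d.imI ∈ (algebraMap (AdjoinRoot p) F).range ∧
        d.imJ ∈ (algebraMap (AdjoinRoot p) F).range ∧
        d.imK ∈ (algebraMap (AdjoinRoot p) F).range))
    (ι : ℍ[k,a,b] → ℍ[F,algebraMap k F a,algebraMap k F b])
    (hι : ∀ q : ℍ[k,a,b], ι q =
      ⟨algebraMap k F q.re, algebraMap k F q.imI, algebraMap k F q.imJ, algebraMap k F q.imK⟩)
    (n : ℕ) (kc : Fin (n + 2) → k) (kd : Fin (n + 1) → k)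
    (hlead : IsUnit (kc (Fin.last _) ^ 2 - a * kd (Fin.last n) ^ 2))
    (f : AdjoinRoot p)
    (hf : f = (∑ α : Fin (n + 2),
          algebraMap k (AdjoinRoot p) (kc α) * AdjoinRoot.of p X ^ (α : ℕ))
        + ∑ β : Fin (n + 1),
          algebraMap k (AdjoinRoot p) (kd β) * AdjoinRoot.of p X ^ (β : ℕ)
            * AdjoinRoot.root p)
    (M fM : Set ℍ[F,algebraMap k F a,algebraMap k F b])
    (hM : ∀ t, t ∈ M ↔ ∃ d ∈ HR, t = e * d)
    (hfM : ∀ t, t ∈ fM ↔ ∃ m ∈ M, t = algebraMap (AdjoinRoot p) F f • m) :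
    (∀ c : Fin (n + 1) → ℍ[k,a,b],
        (∑ α : Fin (n + 1), (x ^ (α : ℕ) • e) * ι (c α)) ∈ fM → ∀ α, c α = 0)
      ∧ (∀ t ∈ M, ∃ c : Fin (n + 1) → ℍ[k,a,b],
          t - ∑ α : Fin (n + 1), (x ^ (α : ℕ) • e) * ι (c α) ∈ fM) := by
  classical
  obtain rfl : e = conicElement a b x y := he
  obtain rfl : HR = quaternionsOver (algebraMap (AdjoinRoot p) F).range := Set.ext hHR
  obtain rfl : ι = quaternionBaseChange a b := funext hι
  have hR : IsConicRing a b x y (algebraMap (AdjoinRoot p) F).range := by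
    subst hx hy
    exact isConicRing_range_algebraMap_adjoinRoot hp
  have hfxy : algebraMap (AdjoinRoot p) F f =
      aeval x (ofFn _ kc) + aeval x (ofFn _ kd) * y := by
    simp only [hf, hx, hy, aeval_ofFn, map_add, map_sum, map_mul, map_pow, Finset.sum_mul,
      ← IsScalarTower.algebraMap_apply]
  have hu : (ofFn _ kc).natDegree ≤ n + 1 :=
    Nat.le_of_lt_succ (ofFn_natDegree_lt (Nat.le_add_left 1 _) kc)
  have hv : (ofFn _ kd).natDegree ≤ n :=
    Nat.le_of_lt_succ (ofFn_natDegree_lt (Nat.le_add_left 1 _) kd)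
  have hnorm : IsUnit ((ofFn _ kc).coeff (n + 1) ^ 2 - a * (ofFn _ kd).coeff n ^ 2) := by
    rwa [ofFn_coeff_eq_val_of_lt _ (Nat.lt_succ_self _),
      ofFn_coeff_eq_val_of_lt _ (Nat.lt_succ_self _)]
  have hdeg : (actionPolynomial a b (ofFn _ kc) (ofFn _ kd)).natDegree = n + 1 :=
    natDegree_actionPolynomial_eq hu hv hnorm
  have hunit : IsUnit (actionPolynomial a b (ofFn _ kc) (ofFn _ kd)).leadingCoeff :=
    isUnit_leadingCoeff_actionPolynomial hu hv hnorm
  refine ⟨fun c hc => ?_, fun t ht => ?_⟩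
  · obtain ⟨t, ht, hct⟩ := (hfM _).mp hc
    obtain ⟨d, hd, rfl⟩ := (hM t).mp ht
    rw [hfxy] at hct
    exact congrFun (hR.eq_zero_of_sum_smul_conicElement_mul_eq hab hdeg hunit hd hct)
  · obtain ⟨d, hd, rfl⟩ := (hM t).mp ht
    obtain ⟨c, d', hd', hc⟩ := hR.exists_conicElement_mul_sub_sum_eq hdeg hunit hd
    exact ⟨c, (hfM _).mpr ⟨_, (hM _).mpr ⟨d', hd', rfl⟩, hfxy ▸ hc⟩⟩

/-- Assume moreover that `D = ℍ[k,a,b]` is a division ring. Let `n ≥ 1` and let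
`f = Σ_{α≤n} c_α x^α + Σ_{β≤n−1} d_β x^β y ∈ R` with `(c_n, d_{n−1}) ≠ (0,0)` (so
`v_∞(f) = −n`). Then the images of `e, e·x, …, e·x^{n−1}` form a basis of the quotient of
the right `D`-module `e·ℍ[R,a,b]` by `f·(e·ℍ[R,a,b])`: they are right-`D`-linearly
independent modulo `f·(e·ℍ[R,a,b])`, and every element of `e·ℍ[R,a,b]` is congruent modulo
`f·(e·ℍ[R,a,b])` to a right `D`-linear combination of them. -/
theorem stmt11 {k : Type*} [Field k] (hchar : (2 : k) ≠ 0) (a b : k)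
    (ha : a ≠ 0) (hb : b ≠ 0)
    (hdiv : ∀ q : ℍ[k, a, b], q ≠ 0 → IsUnit q)
    (p : Polynomial (Polynomial k))
    (hp : p = X ^ 2 - C (C a * X ^ 2 + C b))
    (hIrr : Irreducible p) [IsDomain (AdjoinRoot p)]
    (F : Type*) [Field F] [Algebra (AdjoinRoot p) F] [IsFractionRing (AdjoinRoot p) F]
    [Algebra k F] [IsScalarTower k (AdjoinRoot p) F]
    (x y : F)
    (hx : x = algebraMap (AdjoinRoot p) F (AdjoinRoot.of p X))
    (hy : y = algebraMap (AdjoinRoot p) F (AdjoinRoot.root p))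
    (e : ℍ[F, algebraMap k F a, algebraMap k F b])
    (he : e = ⟨0, algebraMap k F b, algebraMap k F a * x, y⟩)
    (HR : Set ℍ[F, algebraMap k F a, algebraMap k F b])
    (hHR : ∀ d : ℍ[F, algebraMap k F a, algebraMap k F b],
      d ∈ HR ↔ (d.re ∈ (algebraMap (AdjoinRoot p) F).range ∧
        d.imI ∈ (algebraMap (AdjoinRoot p) F).range ∧
        d.imJ ∈ (algebraMap (AdjoinRoot p) F).range ∧
        d.imK ∈ (algebraMap (AdjoinRoot p) F).range))
    (ι : ℍ[k, a, b] → ℍ[F, algebraMap k F a, algebraMap k F b])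
    (hι : ∀ q : ℍ[k, a, b], ι q =
      ⟨algebraMap k F q.re, algebraMap k F q.imI, algebraMap k F q.imJ, algebraMap k F q.imK⟩)
    (n : ℕ) (hn : 0 < n)
    (kc : Fin (n + 1) → k) (kd : Fin n → k)
    (hlead : ¬(kc (Fin.last n) = 0 ∧ kd ⟨n - 1, by omega⟩ = 0))
    (f : AdjoinRoot p)
    (hf : f = (∑ α : Fin (n + 1),
          algebraMap k (AdjoinRoot p) (kc α) * AdjoinRoot.of p X ^ (α : ℕ))
        + ∑ β : Fin n,
          algebraMap k (AdjoinRoot p) (kd β) * AdjoinRoot.of p X ^ (β : ℕ)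
            * AdjoinRoot.root p)
    (M fM : Set ℍ[F, algebraMap k F a, algebraMap k F b])
    (hM : ∀ t, t ∈ M ↔ ∃ d ∈ HR, t = e * d)
    (hfM : ∀ t, t ∈ fM ↔ ∃ m ∈ M, t = algebraMap (AdjoinRoot p) F f • m) :
    (∀ c : Fin n → ℍ[k, a, b],
        (∑ α : Fin n, (x ^ (α : ℕ) • e) * ι (c α)) ∈ fM → ∀ α, c α = 0)
      ∧ (∀ t ∈ M, ∃ c : Fin n → ℍ[k, a, b],
          t - ∑ α : Fin n, (x ^ (α : ℕ) • e) * ι (c α) ∈ fM) := by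
  obtain _ | n := n
  · exact absurd hn (lt_irrefl 0)
  have hunit : IsUnit (⟨kc (Fin.last _), kd (Fin.last n), 0, 0⟩ : ℍ[k,a,b]) :=
    hdiv _ fun h => hlead ⟨congrArg QuaternionAlgebra.re h, congrArg QuaternionAlgebra.imI h⟩
  exact stmt11_general a b (mem_nonZeroDivisors_of_ne_zero (mul_ne_zero ha hb)) p hp F x y hx hy
    e he HR hHR ι hι n kc kd (isUnit_mk_zero_zero_iff.mp hunit) f hf M fM hM hfM
end

section
/- For every nonzero pure quaternion q = i·q₀ + j·q₁ with q₀ ∈ k and q₁ ∈ K, q₁ ≠ 0, the following hold: (1) for all λ, μ ∈ K there exists f ∈ K such that conj(λ + j·μ) · q · (λ + j·μ) = f + j·(q₁·λ² − 2·i·q₀·λ·μ − b·q̄₁·μ²), where conj is quaternion conjugation; (2) the binary quadratic form over K defined by (λ, μ) ↦ q₁·λ² − 2·i·q₀·λ·μ − b·q̄₁·μ² is equivalent (isometric over K) to the diagonal quadratic form ⟨q₁, −q₁·(a·q₀² + b·q₁·q̄₁)⟩, i.e. to ⟨q₁⟩·⟨1, −q²⟩, since q² = a·q₀² + b·q₁·q̄₁.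 -/
open Quaternion

/-!
Multiplication in `K ⊕ jK` is governed by `j * c = σ c * j` and `j * j = β`. Expanding
`star (l + j * m) * (r + j * s) * (l + j * m)` with these rules, the coefficient of `j` is
`s * l ^ 2 - (r - σ r) * l * m - β * σ s * m ^ 2`, and `σ r = -r` when the quaternion is pure.
The substitution `(l, m) = (x + r * y, s * y)` then completes the square without dividing.
-/

section Adjoin

variable {R A B : Type*} [CommSemiring R]

theorem semiconjBy_of_adjoin_eq_top [Semiring A] [Semiring B] [Algebra R A] [Algebra R B]
    {s : Set A} (hs : Algebra.adjoin R s = ⊤) {f g : A →ₐ[R] B} {d : B}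
    (h : ∀ x ∈ s, SemiconjBy d (f x) (g x)) (x : A) : SemiconjBy d (f x) (g x) := by
  have hx : x ∈ Algebra.adjoin R s := hs ▸ Algebra.mem_top
  induction hx using Algebra.adjoin_induction with
  | mem x hx => exact h x hx
  | algebraMap r =>
    simpa only [AlgHom.commutes] using (Algebra.commute_algebraMap_right r d).semiconjBy
  | add x y _ _ hx hy => simpa only [map_add] using hx.add_right hy
  | mul x y _ _ hx hy => simpa only [map_mul] using hx.mul_right hy

theorem star_map_eq_of_adjoin_eq_top [CommSemiring A] [Semiring B] [StarRing B] [Algebra R A]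
    [Algebra R B] (hR : ∀ r : R, star (algebraMap R B r) = algebraMap R B r)
    {s : Set A} (hs : Algebra.adjoin R s = ⊤) {f g : A →ₐ[R] B}
    (h : ∀ x ∈ s, star (f x) = g x) (x : A) : star (f x) = g x := by
  have hx : x ∈ Algebra.adjoin R s := hs ▸ Algebra.mem_top
  induction hx using Algebra.adjoin_induction with
  | mem x hx => exact h x hx
  | algebraMap r => simp only [AlgHom.commutes, hR]
  | add x y _ _ hx hy => simp only [map_add, star_add, hx, hy]
  | mul x y _ _ hx hy => rw [mul_comm x y, map_mul, star_mul, hx, hy, ← map_mul, mul_comm x y]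

end Adjoin

/-- The relations satisfied by a commutative subalgebra `K`, embedded by `ι`, and an element `j`
of a quaternion algebra `D = K ⊕ jK` with its conjugation `star`: the restriction of `star` to `K`
is `σ`, `j` is pure, conjugation by `j` induces `σ`, and `j² = β`. Neither the injectivity of `ι`
nor the directness of the sum `K + jK` is part of the notion. -/
structure IsQuaternionFrame {R K D : Type*} [CommRing R] [CommRing K] [Ring D] [StarRing D]
    [Algebra R K] [Algebra R D] (ι : K →ₐ[R] D) (σ : K →ₐ[R] K) (j : D) (β : R) : Prop where
  involutive : Function.Involutive σ
  star_map (c : K) : star (ι c) = ι (σ c)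
  star_eq_neg : star j = -j
  map_mul_comm (c : K) : ι c * j = j * ι (σ c)
  mul_self : j * j = algebraMap R D β

namespace IsQuaternionFrame

variable {R K D : Type*} [CommRing R] [CommRing K] [Ring D] [StarRing D] [Algebra R K]
  [Algebra R D] {ι : K →ₐ[R] D} {σ : K →ₐ[R] K} {j : D} {β : R}

theorem add_mul_add (h : IsQuaternionFrame ι σ j β) (u v s t : K) :
    (ι u + j * ι v) * (ι s + j * ι t) =
      ι (u * s + algebraMap R K β * σ v * t) + j * ι (σ u * t + v * s) := by
  have map_mul_j_mul : ι u * (j * ι t) = j * ι (σ u * t) := by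
    rw [← mul_assoc, h.map_mul_comm, mul_assoc, map_mul]
  have j_mul_mul_j_mul : j * ι v * (j * ι t) = ι (algebraMap R K β * σ v * t) := by
    rw [mul_assoc, ← mul_assoc (ι v), h.map_mul_comm, ← mul_assoc, ← mul_assoc, h.mul_self,
      map_mul, map_mul, AlgHom.commutes]
  rw [add_mul, mul_add, mul_add, map_mul_j_mul, j_mul_mul_j_mul, mul_assoc j]
  simp only [map_add, map_mul, mul_add]
  abel

theorem star_add_mul (h : IsQuaternionFrame ι σ j β) (l m : K) :
    star (ι l + j * ι m) = ι (σ l) + j * ι (-m) := by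
  rw [star_add, star_mul, h.star_map, h.star_map, h.star_eq_neg, mul_neg, h.map_mul_comm,
    h.involutive, map_neg, mul_neg]

theorem star_mul_mul (h : IsQuaternionFrame ι σ j β) (r s l m : K) :
    star (ι l + j * ι m) * (ι r + j * ι s) * (ι l + j * ι m) =
      ι (σ l * (r * l + algebraMap R K β * σ s * m)
          - algebraMap R K β * σ m * (σ r * m + s * l))
        + j * ι (s * l ^ 2 - (r - σ r) * l * m - algebraMap R K β * σ s * m ^ 2) := by
  rw [h.star_add_mul, mul_assoc, h.add_mul_add, h.add_mul_add, h.involutive, map_neg]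
  congr 3 <;> ring

end IsQuaternionFrame

theorem isQuaternionFrame_of_adjoin_eq_top {R K : Type*} [CommRing R] [CommRing K] [Algebra R K]
    {a b : R} {i : K} (hi : Algebra.adjoin R {i} = ⊤) {σ : K →ₐ[R] K} (hσ : σ i = -i)
    {ι : K →ₐ[R] ℍ[R,a,b]} (hι : ι i = ⟨0, 1, 0, 0⟩) :
    IsQuaternionFrame ι σ ⟨0, 0, 1, 0⟩ b where
  involutive := by
    have hσσ : σ.comp σ = AlgHom.id R K := AlgHom.ext_of_adjoin_eq_top hi <| by simp [hσ]
    exact DFunLike.congr_fun hσσ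
  star_map := by
    refine star_map_eq_of_adjoin_eq_top (g := ι.comp σ)
      (fun r => QuaternionAlgebra.star_coe r) hi ?_
    rintro _ rfl
    rw [AlgHom.comp_apply, hσ, map_neg, hι]
    ext <;> simp
  star_eq_neg := by ext <;> simp
  map_mul_comm c := by
    refine (semiconjBy_of_adjoin_eq_top (f := ι.comp σ) hi ?_ c).symm
    rintro _ rfl
    rw [AlgHom.comp_apply, hσ, map_neg, hι]
    ext <;> simp
  mul_self := by
    rw [QuaternionAlgebra.algebraMap_eq]
    ext <;> simp

/-- The substitution `(x, y) ↦ (x + r * y, p * y)` of two variables, which completes the square in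
the binary form `p * l ^ 2 - 2 * r * l * m - s * m ^ 2`. -/
def completeSquareEquiv {K : Type*} [CommRing K] (p : Kˣ) (r : K) :
    (Fin 2 → K) ≃ₗ[K] K × K where
  toFun w := (w 0 + r * w 1, p * w 1)
  invFun v := ![v.1 - r * (↑p⁻¹ * v.2), ↑p⁻¹ * v.2]
  map_add' v w := by ext <;> simp only [Pi.add_apply, Prod.fst_add, Prod.snd_add] <;> ring
  map_smul' c v := by
    ext <;> simp only [Pi.smul_apply, Prod.smul_fst, Prod.smul_snd, smul_eq_mul, RingHom.id_apply]
      <;> ring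
  left_inv w := by
    ext n
    fin_cases n <;> simp
  right_inv v := by ext <;> simp

theorem equivalent_weightedSumSquares_of_isUnit {K : Type*} [CommRing K] {p : K} (hp : IsUnit p)
    (r s : K) {Q : QuadraticForm K (K × K)}
    (hQ : ∀ l m : K, Q (l, m) = p * l ^ 2 - 2 * r * l * m - s * m ^ 2) :
    Q.Equivalent (QuadraticMap.weightedSumSquares K ![p, -(p * (r ^ 2 + p * s))]) := by
  obtain ⟨p, rfl⟩ := hp
  refine QuadraticMap.Equivalent.symm ⟨{ completeSquareEquiv p r with map_app' := fun w => ?_ }⟩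
  change Q (w 0 + r * w 1, p * w 1) = _
  simp only [hQ, QuadraticMap.weightedSumSquares_apply, Fin.sum_univ_two, Matrix.cons_val_zero,
    Matrix.cons_val_one, smul_eq_mul]
  ring

theorem stmt12_general {k K : Type*} [CommRing k] [CommRing K] [Algebra k K] (a b : k)
    (i : K) (hi : i ^ 2 = algebraMap k K a) (hgen : Algebra.adjoin k {i} = ⊤)
    (conj : K →ₐ[k] K) (hconj : conj i = -i)
    (ι : K →ₐ[k] ℍ[k,a,b]) (hι : ι i = ⟨0, 1, 0, 0⟩)
    (j : ℍ[k,a,b]) (hj : j = ⟨0, 0, 1, 0⟩)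
    (q : ℍ[k,a,b]) (q₀ : k) (q₁ : K) (hq₁ : IsUnit q₁)
    (hq : q = q₀ • (⟨0, 1, 0, 0⟩ : ℍ[k,a,b]) + j * ι q₁)
    (Q₁ : QuadraticForm K (K × K))
    (hQ₁ : ∀ l m : K, Q₁ (l, m) =
      q₁ * l ^ 2 - algebraMap k K (2 * q₀) * i * l * m
        - algebraMap k K b * conj q₁ * m ^ 2) :
    (∀ l m : K, ∃ f : K,
        star (ι l + j * ι m) * q * (ι l + j * ι m)
          = ι f + j * ι (q₁ * l ^ 2 - algebraMap k K (2 * q₀) * i * l * m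
              - algebraMap k K b * conj q₁ * m ^ 2))
      ∧ Q₁.Equivalent (QuadraticMap.weightedSumSquares K
          ![q₁, -(q₁ * (algebraMap k K (a * q₀ ^ 2)
              + algebraMap k K b * (q₁ * conj q₁)))]) := by
  have sub_conj : algebraMap k K q₀ * i - conj (algebraMap k K q₀ * i)
      = algebraMap k K (2 * q₀) * i := by
    simp only [map_mul, AlgHom.commutes, hconj, map_ofNat]
    ring
  constructor
  · intro l m
    have frame : IsQuaternionFrame ι conj j b :=
      hj ▸ isQuaternionFrame_of_adjoin_eq_top hgen hconj hι
    have q_eq : q = ι (algebraMap k K q₀ * i) + j * ι q₁ := by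
      rw [hq, ← hι, ← Algebra.smul_def, map_smul]
    rw [q_eq, ← sub_conj]
    exact ⟨_, frame.star_mul_mul _ q₁ l m⟩
  · have sq_eq : algebraMap k K (a * q₀ ^ 2) = (algebraMap k K q₀ * i) ^ 2 := by
      rw [mul_pow, hi, map_mul, map_pow, mul_comm]
    rw [sq_eq, mul_left_comm (algebraMap k K b)]
    refine equivalent_weightedSumSquares_of_isUnit hq₁ _ _ fun l m => ?_
    rw [hQ₁, map_mul, map_ofNat, mul_assoc 2]

/-- Let `K = k(i)` with `i² = a` (`a` a nonsquare), `conj` its nontrivial `k`-automorphism,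
and `D = ℍ[k,a,b]` with `K ⊆ D` via `ι` (sending `i` to the quaternion `i`).  For every
nonzero pure quaternion `q = i·q₀ + j·q₁` with `q₀ ∈ k`, `q₁ ∈ K`, `q₁ ≠ 0`:
(1) for all `λ, μ ∈ K` there is `f ∈ K` with
`conj(λ + j·μ) · q · (λ + j·μ) = f + j·(q₁λ² − 2iq₀λμ − b·conj(q₁)·μ²)`;
(2) the binary quadratic form `(λ, μ) ↦ q₁λ² − 2iq₀λμ − b·conj(q₁)·μ²` over `K` is
equivalent to the diagonal form `⟨q₁, −q₁·(aq₀² + b·q₁·conj(q₁))⟩ = ⟨q₁⟩·⟨1, −q²⟩`. -/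
theorem stmt12 {k K : Type*} [Field k] [Field K] [Algebra k K]
    (hchar : (2 : k) ≠ 0) (a b : k) (hb : b ≠ 0) (hsq : ∀ c : k, c ^ 2 ≠ a)
    (i : K) (hi : i ^ 2 = algebraMap k K a) (hgen : Algebra.adjoin k {i} = ⊤)
    (conj : K ≃ₐ[k] K) (hconj : conj i = -i)
    (ι : K →ₐ[k] ℍ[k, a, b]) (hι : ι i = ⟨0, 1, 0, 0⟩)
    (j : ℍ[k, a, b]) (hj : j = ⟨0, 0, 1, 0⟩)
    (q : ℍ[k, a, b]) (q₀ : k) (q₁ : K) (hq₁ : q₁ ≠ 0)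
    (hq : q = q₀ • (⟨0, 1, 0, 0⟩ : ℍ[k, a, b]) + j * ι q₁)
    (Q₁ : QuadraticForm K (K × K))
    (hQ₁ : ∀ l m : K, Q₁ (l, m) =
      q₁ * l ^ 2 - algebraMap k K (2 * q₀) * i * l * m
        - algebraMap k K b * conj q₁ * m ^ 2) :
    (∀ l m : K, ∃ f : K,
        star (ι l + j * ι m) * q * (ι l + j * ι m)
          = ι f + j * ι (q₁ * l ^ 2 - algebraMap k K (2 * q₀) * i * l * m
              - algebraMap k K b * conj q₁ * m ^ 2))
      ∧ Q₁.Equivalent (QuadraticMap.weightedSumSquares K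
          ![q₁, -(q₁ * (algebraMap k K (a * q₀ ^ 2)
              + algebraMap k K b * (q₁ * conj q₁)))]) :=
  stmt12_general a b i hi hgen conj hconj ι hι j hj q q₀ q₁ hq₁.isUnit hq Q₁ hQ₁
end

section
/- Assume in addition that a is not a square in k. Let λ₀, u₁, u₂ ∈ k with (u₁, u₂) ≠ (0, 0), and set f = λ₀ + u₁·x + u₂·y ∈ R. Then the quotient ring R/(f) is isomorphic as a k-algebra to k[T]/(T² − c), where c = a·λ₀² + b·u₁² − a·b·u₂². -/
open Polynomial

/-!
With `√a` adjoined, `y² - ax²` is the norm of `y + √a x`. On the line `l + ux + vy = 0` one has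
`(y + √a x)(u + √a v) = t - √a l` with `t = uy + avx`. Taking norms, `b(u² - av²) = t² - al²` on
the conic `y² = ax² + b`, so `t² = al² + bu² - abv²`. Conversely, when `u² - av²` is a unit,
dividing by `u + √a v` recovers the point `(x, y)` from `t`. For `a` a non-square in a field, the
norm `u² - av²` vanishes only at `(0, 0)`.
-/

section ConicLine

variable {S : Type*} [CommRing S] {a b l u v e x y t : S}

/-- The parameter `t = uy + avx` of the point `(x, y)` on a line `l + ux + vy = 0`. -/
def lineParameter (a u v x y : S) : S := u * y + a * v * x

/-- The `x`-coordinate of the point with parameter `t` on the line `l + ux + vy = 0`; here `e`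
stands for the inverse of `u² - av²`. -/
def lineAbscissa (l u v e t : S) : S := -e * (l * u + v * t)

/-- The `y`-coordinate of the point with parameter `t` on the line `l + ux + vy = 0`; here `e`
stands for the inverse of `u² - av²`. -/
def lineOrdinate (a l u v e t : S) : S := e * (u * t + a * l * v)

/-- The constant `al² + bu² - abv²` whose square roots are the parameters of the points where the
line `l + ux + vy = 0` meets the conic `y² = ax² + b`. -/
def lineRadicand (a b l u v : S) : S := a * l ^ 2 + b * u ^ 2 - a * b * v ^ 2

theorem map_lineRadicand {T : Type*} [CommRing T] (φ : S →+* T) (a b l u v : S) :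
    φ (lineRadicand a b l u v) = lineRadicand (φ a) (φ b) (φ l) (φ u) (φ v) := by
  simp only [lineRadicand, map_sub, map_add, map_mul, map_pow]

theorem sq_sub_mul_sq_mul_eq_lineParameter_sq_sub (a u v x y : S) :
    (y ^ 2 - a * x ^ 2) * (u ^ 2 - a * v ^ 2) =
      lineParameter a u v x y ^ 2 - a * (u * x + v * y) ^ 2 := by
  rw [lineParameter]
  linear_combination
    sq_add_mul_sq_mul_sq_add_mul_sq (x₁ := y) (x₂ := x) (y₁ := u) (y₂ := v) (n := -a)

theorem lineParameter_sq (hconic : y ^ 2 = a * x ^ 2 + b) (hline : l + u * x + v * y = 0) :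
    lineParameter a u v x y ^ 2 = lineRadicand a b l u v := by
  have hnorm : y ^ 2 - a * x ^ 2 = b := sub_eq_of_eq_add' hconic
  have hl : u * x + v * y = -l := by linear_combination hline
  have hmul := sq_sub_mul_sq_mul_eq_lineParameter_sq_sub a u v x y
  rw [hnorm, hl] at hmul
  rw [lineRadicand]
  linear_combination -hmul

theorem lineAbscissa_lineParameter (he : e * (u ^ 2 - a * v ^ 2) = 1)
    (hline : l + u * x + v * y = 0) :
    lineAbscissa l u v e (lineParameter a u v x y) = x := by
  simp only [lineAbscissa, lineParameter]
  linear_combination x * he - e * u * hline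

theorem lineOrdinate_lineParameter (he : e * (u ^ 2 - a * v ^ 2) = 1)
    (hline : l + u * x + v * y = 0) :
    lineOrdinate a l u v e (lineParameter a u v x y) = y := by
  simp only [lineOrdinate, lineParameter]
  linear_combination y * he + e * a * v * hline

theorem lineParameter_lineAbscissa_lineOrdinate (he : e * (u ^ 2 - a * v ^ 2) = 1) (l t : S) :
    lineParameter a u v (lineAbscissa l u v e t) (lineOrdinate a l u v e t) = t := by
  simp only [lineAbscissa, lineOrdinate, lineParameter]
  linear_combination t * he

theorem lineAbscissa_lineOrdinate_mem_line (he : e * (u ^ 2 - a * v ^ 2) = 1) (l t : S) :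
    l + u * lineAbscissa l u v e t + v * lineOrdinate a l u v e t = 0 := by
  simp only [lineAbscissa, lineOrdinate]
  linear_combination -l * he

theorem lineAbscissa_lineOrdinate_mem_conic (he : e * (u ^ 2 - a * v ^ 2) = 1)
    (ht : t ^ 2 = lineRadicand a b l u v) :
    lineOrdinate a l u v e t ^ 2 = a * lineAbscissa l u v e t ^ 2 + b := by
  set x := lineAbscissa l u v e t
  set y := lineOrdinate a l u v e t
  have hl : u * x + v * y = -l := by
    linear_combination lineAbscissa_lineOrdinate_mem_line he l t
  have hmul := sq_sub_mul_sq_mul_eq_lineParameter_sq_sub a u v x y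
  rw [lineParameter_lineAbscissa_lineOrdinate he l t, hl, ht, lineRadicand] at hmul
  have hcancel : (y ^ 2 - a * x ^ 2) * (u ^ 2 - a * v ^ 2) = b * (u ^ 2 - a * v ^ 2) := by
    linear_combination hmul
  have hunit : IsUnit (u ^ 2 - a * v ^ 2) := .of_mul_eq_one_right e he
  exact sub_eq_iff_eq_add'.1 (hunit.mul_left_injective hcancel)

end ConicLine

section SquareRoot

variable {k : Type*} [CommRing k] {S : Type*} [CommRing S] [Algebra k S] {c : k}

theorem root_X_sq_sub_C_sq (c : k) :
    AdjoinRoot.root (X ^ 2 - C c) ^ 2 = algebraMap k (AdjoinRoot (X ^ 2 - C c)) c := by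
  have h := AdjoinRoot.eval₂_root (X ^ 2 - C c)
  rwa [eval₂_sub, eval₂_X_pow, eval₂_C, sub_eq_zero] at h

/-- The homomorphism out of `k[T]/(T² - c)` given by a square root `t` of `c` in `S`. -/
noncomputable def liftSqrt (t : S) (ht : t ^ 2 = algebraMap k S c) :
    AdjoinRoot (X ^ 2 - C c) →ₐ[k] S :=
  AdjoinRoot.liftAlgHom _ (Algebra.ofId k S) t (by simp [ht])

@[simp]
theorem liftSqrt_root {t : S} (ht : t ^ 2 = algebraMap k S c) :
    liftSqrt t ht (AdjoinRoot.root (X ^ 2 - C c)) = t :=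
  AdjoinRoot.liftAlgHom_root ..

end SquareRoot

section ConicRing

variable {k : Type*} [CommRing k] {S : Type*} [CommRing S] [Algebra k S]

/-- The coordinate ring `k[X, Y]/(Y² - aX² - b)` of an affine conic, as an extension of `k[X]` by
a root of a polynomial in `Y`. -/
abbrev ConicRing (a b : k) : Type _ :=
  AdjoinRoot (X ^ 2 - C (C a * X ^ 2 + C b) : k[X][X])

namespace ConicRing

variable {a b l u v e : k}

/-- The coordinate function `x` on the conic `y² = ax² + b`. -/
noncomputable def x (a b : k) : ConicRing a b := AdjoinRoot.of _ X

/-- The coordinate function `y` on the conic `y² = ax² + b`. -/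
noncomputable def y (a b : k) : ConicRing a b := AdjoinRoot.root _

theorem y_sq (a b : k) :
    y a b ^ 2 = algebraMap k _ a * x a b ^ 2 + algebraMap k _ b := by
  have h := AdjoinRoot.mk_self (f := (X ^ 2 - C (C a * X ^ 2 + C b) : k[X][X]))
  rw [← sub_eq_zero]
  simpa [x, y, AdjoinRoot.algebraMap_eq', AdjoinRoot.mk_X, AdjoinRoot.mk_C] using h

/-- The homomorphism out of the coordinate ring given by an `S`-valued point of the conic. -/
noncomputable def lift (s t : S) (h : t ^ 2 = algebraMap k S a * s ^ 2 + algebraMap k S b) :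
    ConicRing a b →ₐ[k] S :=
  AdjoinRoot.liftAlgHom _ (aeval s) t (by simp [h, ← Polynomial.algebraMap_eq])

@[simp]
theorem lift_x {s t : S} (h : t ^ 2 = algebraMap k S a * s ^ 2 + algebraMap k S b) :
    lift s t h (x a b) = s := by
  simp [lift, x]

@[simp]
theorem lift_y {s t : S} (h : t ^ 2 = algebraMap k S a * s ^ 2 + algebraMap k S b) :
    lift s t h (y a b) = t := by
  simp [lift, y]

theorem algHom_ext {φ ψ : ConicRing a b →ₐ[k] S} (hx : φ (x a b) = ψ (x a b))
    (hy : φ (y a b) = ψ (y a b)) : φ = ψ :=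
  AdjoinRoot.algHom_ext' (Polynomial.algHom_ext hx) hy

/-- The function `l + ux + vy` on the conic `y² = ax² + b`. -/
noncomputable def line (a b l u v : k) : ConicRing a b :=
  algebraMap k _ l + algebraMap k _ u * x a b + algebraMap k _ v * y a b

/-- The coordinate ring of the intersection of the conic `y² = ax² + b` with the line
`l + ux + vy = 0`. -/
abbrev LineSection (a b l u v : k) : Type _ :=
  ConicRing a b ⧸ Ideal.span {line a b l u v}

namespace LineSection

/-- The restriction of the coordinate function `x` to the line section. -/
noncomputable def x (a b l u v : k) : LineSection a b l u v :=
  Ideal.Quotient.mkₐ k _ (ConicRing.x a b)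

/-- The restriction of the coordinate function `y` to the line section. -/
noncomputable def y (a b l u v : k) : LineSection a b l u v :=
  Ideal.Quotient.mkₐ k _ (ConicRing.y a b)

theorem y_sq (a b l u v : k) :
    y a b l u v ^ 2 = algebraMap k _ a * x a b l u v ^ 2 + algebraMap k _ b := by
  simpa only [x, y, map_pow, map_add, map_mul, AlgHom.commutes] using
    congrArg (Ideal.Quotient.mkₐ k (Ideal.span {line a b l u v})) (ConicRing.y_sq a b)

theorem line_eq_zero (a b l u v : k) :
    algebraMap k _ l + algebraMap k _ u * x a b l u v + algebraMap k _ v * y a b l u v = 0 :=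
  Ideal.Quotient.eq_zero_iff_mem.2 (Ideal.mem_span_singleton_self (line a b l u v))

/-- The homomorphism out of the coordinate ring of a line section given by an `S`-valued point. -/
noncomputable def lift (s t : S) (hconic : t ^ 2 = algebraMap k S a * s ^ 2 + algebraMap k S b)
    (hline : algebraMap k S l + algebraMap k S u * s + algebraMap k S v * t = 0) :
    LineSection a b l u v →ₐ[k] S :=
  Ideal.Quotient.liftₐ _ (ConicRing.lift s t hconic) fun f hf ↦ by
    refine (Ideal.span_singleton_le_iff_mem (RingHom.ker _)).2 ?_ hf
    simpa [RingHom.mem_ker, line] using hline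

section lift

variable {s t : S} (hconic : t ^ 2 = algebraMap k S a * s ^ 2 + algebraMap k S b)
  (hline : algebraMap k S l + algebraMap k S u * s + algebraMap k S v * t = 0)

@[simp]
theorem lift_x : lift s t hconic hline (x a b l u v) = s := ConicRing.lift_x hconic

@[simp]
theorem lift_y : lift s t hconic hline (y a b l u v) = t := ConicRing.lift_y hconic

end lift

theorem algHom_ext {φ ψ : LineSection a b l u v →ₐ[k] S}
    (hx : φ (x a b l u v) = ψ (x a b l u v)) (hy : φ (y a b l u v) = ψ (y a b l u v)) : φ = ψ :=
  Ideal.Quotient.algHom_ext _ (ConicRing.algHom_ext hx hy)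

theorem algebraMap_mul_sq_sub_eq_one (he : e * (u ^ 2 - a * v ^ 2) = 1) :
    algebraMap k S e * (algebraMap k S u ^ 2 - algebraMap k S a * algebraMap k S v ^ 2) = 1 := by
  simpa only [map_mul, map_sub, map_pow, map_one] using congrArg (algebraMap k S) he

/-- A square root `t` of `al² + bu² - abv²` gives the point with parameter `t` of the line
section. -/
noncomputable def liftOfSq (he : e * (u ^ 2 - a * v ^ 2) = 1) (t : S)
    (ht : t ^ 2 = algebraMap k S (lineRadicand a b l u v)) :
    LineSection a b l u v →ₐ[k] S :=
  lift
    (lineAbscissa (algebraMap k S l) (algebraMap k S u) (algebraMap k S v) (algebraMap k S e) t)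
    (lineOrdinate (algebraMap k S a) (algebraMap k S l) (algebraMap k S u) (algebraMap k S v)
      (algebraMap k S e) t)
    (lineAbscissa_lineOrdinate_mem_conic (algebraMap_mul_sq_sub_eq_one he)
      (by rwa [map_lineRadicand] at ht))
    (lineAbscissa_lineOrdinate_mem_line (algebraMap_mul_sq_sub_eq_one he) _ t)

/-- The function `uy + avx` on the line section, which parametrizes it. -/
noncomputable def parameter (a b l u v : k) : LineSection a b l u v :=
  lineParameter (algebraMap k _ a) (algebraMap k _ u) (algebraMap k _ v)
    (x a b l u v) (y a b l u v)

theorem parameter_sq (a b l u v : k) :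
    parameter a b l u v ^ 2 = algebraMap k _ (lineRadicand a b l u v) := by
  rw [map_lineRadicand]
  exact lineParameter_sq (y_sq a b l u v) (line_eq_zero a b l u v)

theorem liftOfSq_parameter (he : e * (u ^ 2 - a * v ^ 2) = 1) {t : S}
    (ht : t ^ 2 = algebraMap k S (lineRadicand a b l u v)) :
    liftOfSq he t ht (parameter a b l u v) = t := by
  simpa [parameter, liftOfSq, lineParameter] using
    lineParameter_lineAbscissa_lineOrdinate (algebraMap_mul_sq_sub_eq_one he) (algebraMap k S l) t

theorem comp_liftOfSq_eq_id (he : e * (u ^ 2 - a * v ^ 2) = 1) {t : S}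
    (ht : t ^ 2 = algebraMap k S (lineRadicand a b l u v))
    {φ : S →ₐ[k] LineSection a b l u v} (hφ : φ t = parameter a b l u v) :
    φ.comp (liftOfSq he t ht) = AlgHom.id k _ := by
  have heL := algebraMap_mul_sq_sub_eq_one (S := LineSection a b l u v) he
  refine algHom_ext ?_ ?_
  · simpa [liftOfSq, lineAbscissa, hφ, parameter] using
      lineAbscissa_lineParameter heL (line_eq_zero a b l u v)
  · simpa [liftOfSq, lineOrdinate, hφ, parameter] using
      lineOrdinate_lineParameter heL (line_eq_zero a b l u v)

/-- The isomorphism from the line section to `k[T]/(T² - c)`, `c = al² + bu² - abv²`, that sends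
`uy + avx` to the class of `T`; `e` stands for the inverse of `u² - av²`. -/
noncomputable def algEquivAdjoinRoot (he : e * (u ^ 2 - a * v ^ 2) = 1) :
    LineSection a b l u v ≃ₐ[k] AdjoinRoot (X ^ 2 - C (lineRadicand a b l u v)) :=
  AlgEquiv.ofAlgHom (liftOfSq he (AdjoinRoot.root _) (root_X_sq_sub_C_sq _))
    (liftSqrt (parameter a b l u v) (parameter_sq a b l u v))
    (AdjoinRoot.algHom_ext (by simp [liftOfSq_parameter]))
    (comp_liftOfSq_eq_id he _ (liftSqrt_root _))

end LineSection

end ConicRing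

end ConicRing

theorem sq_sub_mul_sq_ne_zero {k : Type*} [Field k] {a u v : k} (ha : ¬IsSquare a)
    (huv : ¬(u = 0 ∧ v = 0)) : u ^ 2 - a * v ^ 2 ≠ 0 := by
  intro hzero
  have huv_sq : a * v ^ 2 = u ^ 2 := (sub_eq_zero.1 hzero).symm
  rcases eq_or_ne v 0 with rfl | hv
  · exact huv ⟨by simpa using huv_sq.symm, rfl⟩
  · exact ha ((isSquare_iff_exists_sq a).2 ⟨u / v, by rw [div_pow, ← huv_sq]; field_simp⟩)

theorem stmt13_general {k : Type*} [CommRing k] (a b : k)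
    (p : Polynomial (Polynomial k))
    (hp : p = X ^ 2 - C (C a * X ^ 2 + C b))
    (lam0 u1 u2 : k) (hu : IsUnit (u1 ^ 2 - a * u2 ^ 2))
    (f : AdjoinRoot p)
    (hf : f = algebraMap k (AdjoinRoot p) lam0
        + algebraMap k (AdjoinRoot p) u1 * AdjoinRoot.of p X
        + algebraMap k (AdjoinRoot p) u2 * AdjoinRoot.root p) :
    Nonempty ((AdjoinRoot p ⧸ Ideal.span {f}) ≃ₐ[k]
      (Polynomial k ⧸ Ideal.span
        {(X : Polynomial k) ^ 2 - C (a * lam0 ^ 2 + b * u1 ^ 2 - a * b * u2 ^ 2)})) := by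
  obtain ⟨e, he⟩ := hu.exists_left_inv
  subst hp hf
  exact ⟨ConicRing.LineSection.algEquivAdjoinRoot he⟩

/-- Let `k` be a field of characteristic `≠ 2`, `a, b ∈ k` nonzero with `a` not a square,
and let `R = k[X,Y]/(Y² − aX² − b)` (realized as `AdjoinRoot p` for
`p = Y² − (aX² + b) ∈ (k[X])[Y]`), with `x, y` the images of `X, Y`.  For
`λ₀, u₁, u₂ ∈ k` with `(u₁, u₂) ≠ (0,0)` and `f = λ₀ + u₁·x + u₂·y`, the quotient `R/(f)`
is isomorphic as a `k`-algebra to `k[T]/(T² − c)` where `c = aλ₀² + bu₁² − abu₂²`. -/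
theorem stmt13 {k : Type*} [Field k] (hchar : (2 : k) ≠ 0) (a b : k)
    (ha : a ≠ 0) (hb : b ≠ 0) (hsq : ∀ c : k, c ^ 2 ≠ a)
    (p : Polynomial (Polynomial k))
    (hp : p = X ^ 2 - C (C a * X ^ 2 + C b))
    (hIrr : Irreducible p)
    (lam0 u1 u2 : k) (hu : ¬(u1 = 0 ∧ u2 = 0))
    (f : AdjoinRoot p)
    (hf : f = algebraMap k (AdjoinRoot p) lam0
        + algebraMap k (AdjoinRoot p) u1 * AdjoinRoot.of p X
        + algebraMap k (AdjoinRoot p) u2 * AdjoinRoot.root p) :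
    Nonempty ((AdjoinRoot p ⧸ Ideal.span {f}) ≃ₐ[k]
      (Polynomial k ⧸ Ideal.span
        {(X : Polynomial k) ^ 2 - C (a * lam0 ^ 2 + b * u1 ^ 2 - a * b * u2 ^ 2)})) := by
  have hns : ¬IsSquare a := fun ⟨c, hc⟩ ↦ hsq c ((sq c).trans hc.symm)
  exact stmt13_general a b p hp lam0 u1 u2 (sq_sub_mul_sq_ne_zero hns hu).isUnit f hf
end
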